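/- For a smooth fan X with vertex p, the following are equivalent: (ii) E(X) is dense in X; (iii) E(X) ∪ {p} is connected; (vi) E(X) is homeomorphic to complete Erdős space 𝔈_c. Consequently, any two smooth fans whose endpoint sets are homeomorphic to 𝔈_c are homeomorphic to each other (both being the Lelek fan, the unique smooth fan with dense endpoint set). -/

import Mathlib

/-!
A smooth fan `X` is determined by the heights of its legs. Recording the height of the leg of slope
`c` gives an upper semicontinuous function `φ` (`fanφ`) on the closure `K` of the set of slopes, a
nonempty compact metrizable totally disconnected space. The endpoints of `X` are the tips
`(φ c * c, φ c)` with `φ c > 0` (`IsSmoothFan.mem_endpoints_iff`), so that `E(X)` is homeomorphic to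
the part of the graph of `φ` above height `0` (`PosGraph`, `IsSmoothFan.endpointsHomeo`). Density of
`E(X)` in `X` becomes density of this graph in the region below it; such a `φ` is called a Lelek
function (`IsLelek`, `IsSmoothFan.dense_iff`).

Uniqueness: any two Lelek functions `φ : C → ℝ`, `ψ : D → ℝ` on spaces of this type are equivalent,
in the sense that `ψ (h x) = α x * φ x` for a homeomorphism `h` and a continuous positive `α`
(`exists_homeo_of_isLelek`). The proof is a back-and-forth construction of finer and finer matching
clopen partitions of `C` and `D`, in which the ratio of the maxima of `ψ` and `φ` over matched
pieces changes less and less; the logarithms of these ratios converge uniformly to `log α`. In terms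
of fans, `h` and `α` give a homeomorphism which is linear on legs (`IsSmoothFan.nonempty_homeo`).

Complete Erdős space: the compact space `({0} ∪ {1/m})^ℕ` carries the function
`x ↦ 1 / (1 + ∑ xₙ²)` (equal to `0` where the sum diverges), which is Lelek (`isLelek_erdosφ`), and
its positive graph is `𝔈_c` (`erdosHomeo`), because in `ℓ²` coordinatewise convergence together with
convergence of norms is norm convergence. By uniqueness, dense endpoint sets are homeomorphic to
`𝔈_c`. Conversely, in the positive graph of a Lelek function every nonempty clopen set contains
points of arbitrarily small height (`exists_low_of_isClopen`), so no point is a point of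
zero-dimensionality (`not_zeroDimPointAt`); if `φ` is not Lelek then some interval of heights is
skipped over an open set of slopes, which yields a point of zero-dimensionality of `E(X)`
(`exists_zeroDimPointAt`). Hence `E(X)` is not homeomorphic to `𝔈_c` in that case.

Connectedness: a clopen subset of `E(X) ∪ {p}` missing `p` is a clopen subset of `E(X)` without
points of small height, so it is empty if `φ` is Lelek; and if some interval of heights is skipped
over an open set of slopes, the part of `E(X)` above it is separated from `p` (`fan_separation`).
-/

open Set Topology

noncomputable section

namespace SmoothFanPaper

/-- `A` is an arc (a homeomorphic copy of `[0,1]`) with endpoints `a` and `b`. -/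
def IsArc {α : Type*} [TopologicalSpace α] (A : Set α) (a b : α) : Prop :=
  ∃ h : (Set.Icc (0:ℝ) 1) ≃ₜ A,
    (h ⟨0, Set.left_mem_Icc.mpr zero_le_one⟩ : α) = a ∧
    (h ⟨1, Set.right_mem_Icc.mpr zero_le_one⟩ : α) = b

/-- The order of `x` in `X` is at least `n`: there are `n` arcs contained in `X`, each with
`x` as an endpoint, which pairwise meet only in `x`. -/
def OrderAtLeast {α : Type*} [TopologicalSpace α] (X : Set α) (x : α) (n : ℕ) : Prop :=
  ∃ A : Fin n → Set α, (∀ i, A i ⊆ X) ∧ (∀ i, ∃ b, IsArc (A i) x b) ∧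
    ∀ i j, i ≠ j → A i ∩ A j = {x}

/-- The set of endpoints of `X`: points of order exactly `1`. -/
def Endpoints {α : Type*} [TopologicalSpace α] (X : Set α) : Set α :=
  {x | x ∈ X ∧ OrderAtLeast X x 1 ∧ ¬ OrderAtLeast X x 2}

/-- The Cantor fan: the union of all straight-line segments from the origin to the points of
`cantorSet × {1}` in the plane. -/
def CantorFan : Set (ℝ × ℝ) :=
  {q | ∃ c ∈ cantorSet, ∃ t ∈ Set.Icc (0:ℝ) 1, q = (t * c, t)}

/-- The cone point of the Cantor fan. -/
def fanVertex : ℝ × ℝ := (0, 0)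

/-- A smooth fan: a non-degenerate subcontinuum of the Cantor fan containing the cone point,
whose cone point (the vertex) has order at least 2.  (Every statement below about smooth fans
is invariant under homeomorphisms, so we may realize all smooth fans concretely as such
subcontinua.) -/
structure IsSmoothFan (X : Set (ℝ × ℝ)) : Prop where
  subset_fan : X ⊆ CantorFan
  isCompact : IsCompact X
  isConnected : IsConnected X
  nondegenerate : ∃ x ∈ X, ∃ y ∈ X, x ≠ y
  vertex_mem : fanVertex ∈ X
  vertex_order : OrderAtLeast X fanVertex 2

/-- Two subsets of `(0,1)` are order isomorphic if some order preserving self-homeomorphism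
of `[0,1]` maps one onto the other. -/
def OrderIsomorphic (A B : Set ℝ) : Prop :=
  ∃ h : (Set.Icc (0:ℝ) 1) ≃ₜ (Set.Icc (0:ℝ) 1), StrictMono h ∧
    Subtype.val '' (⇑h '' (Subtype.val ⁻¹' A)) = B

/-- The canonical parametrization of (subsets of) the leg of the Cantor fan through `e`:
a point of the leg is sent to its height, rescaled so that `e` is at height `1`. -/
def legParam (e : ℝ × ℝ) (S : Set (ℝ × ℝ)) : Set ℝ :=
  (fun q : ℝ × ℝ => q.2 / e.2) '' S

/-- The trace of the closure of a set `T` on the open leg `pe ∖ {p, e}` (where `p` is the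
vertex and `pe = segment ℝ p e` is the unique arc in a smooth fan from `p` to an endpoint
`e`), viewed as a subset of `(0,1)` via the canonical parametrization of the leg. -/
def legTrace (T : Set (ℝ × ℝ)) (e : ℝ × ℝ) : Set ℝ :=
  legParam e ((closure T ∩ segment ℝ fanVertex e) \ {fanVertex, e})

/-- `K` enumerates a countably infinite set `𝒦` of compact subsets of `(0,1)`, no two of
which are order isomorphic. -/
def KFamily (K : ℕ → Set ℝ) : Prop :=
  (∀ n, IsCompact (K n) ∧ K n ⊆ Set.Ioo (0:ℝ) 1) ∧
    ∀ m n, m ≠ n → ¬ OrderIsomorphic (K m) (K n)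

/-- `X` is a `𝒦`-fan with witnessing endpoint set `E_𝒦 = {e n : n ∈ ℕ}`. -/
structure IsKFan (K : ℕ → Set ℝ) (X : Set (ℝ × ℝ)) (e : ℕ → ℝ × ℝ) : Prop where
  fan : IsSmoothFan X
  mem_endpoints : ∀ n, e n ∈ Endpoints X
  trace_iso : ∀ n, OrderIsomorphic (legTrace (Endpoints X) (e n)) (K n)
  trace_not_iso : ∀ x ∈ Endpoints X \ Set.range e, ∀ n,
    ¬ OrderIsomorphic (legTrace (Endpoints X) x) (K n)
  meets_closure : ∀ x ∈ Endpoints X \ Set.range e,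
    ((closure (Set.range e) ∩ segment ℝ fanVertex x) \ {fanVertex}).Nonempty

/-- A smooth fan is endpoint rigid if every self-homeomorphism fixes every endpoint. -/
def EndpointRigid (X : Set (ℝ × ℝ)) : Prop :=
  ∀ h : X ≃ₜ X, ∀ x : X, (x : ℝ × ℝ) ∈ Endpoints X → ((h x : X) : ℝ × ℝ) = (x : ℝ × ℝ)

/-- Complete Erdős space `𝔈_c`: the points of the Hilbert space `ℓ²` all of whose
coordinates lie in `{0} ∪ {1/m : m ≥ 1}`. -/
def ErdosSpace : Set (lp (fun _ : ℕ => ℝ) 2) :=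
  {x | ∀ n : ℕ, x n = 0 ∨ ∃ m : ℕ, 0 < m ∧ x n = 1 / m}

/-- `z` is a point of zero-dimensionality of the space it lives in: it has a neighborhood
basis of clopen subsets. -/
def ZeroDimPointAt {α : Type*} [TopologicalSpace α] (z : α) : Prop :=
  ∀ U ∈ nhds z, ∃ V : Set α, IsClopen V ∧ z ∈ V ∧ V ⊆ U
/-- `L₀^φ = {(x,y) : x ∈ C, 0 ≤ y ≤ φ(x)}`, over the Cantor set. -/
def L0 (φ : ℝ → ℝ) : Set (ℝ × ℝ) :=
  {q | q.1 ∈ cantorSet ∧ 0 ≤ q.2 ∧ q.2 ≤ φ q.1}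

/-- `G₀^φ = {(x,φ(x)) : x ∈ C, φ(x) > 0}`, over the Cantor set. -/
def G0 (φ : ℝ → ℝ) : Set (ℝ × ℝ) :=
  {q | q.1 ∈ cantorSet ∧ 0 < q.2 ∧ q.2 = φ q.1}

/-- The setoid on `L₀^φ` identifying the set `C × {0}` to a point. -/
def L0Setoid (φ : ℝ → ℝ) : Setoid (L0 φ) where
  r a b := a = b ∨ ((a : ℝ × ℝ).2 = 0 ∧ (b : ℝ × ℝ).2 = 0)
  iseqv := by
    constructor
    · exact fun _ => Or.inl rfl
    · rintro a b (rfl | ⟨h1, h2⟩)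
      · exact Or.inl rfl
      · exact Or.inr ⟨h2, h1⟩
    · rintro a b c (rfl | ⟨h1, h2⟩) (rfl | ⟨h3, h4⟩)
      · exact Or.inl rfl
      · exact Or.inr ⟨h3, h4⟩
      · exact Or.inr ⟨h1, h2⟩
      · exact Or.inr ⟨h1, h4⟩

/-- The quotient space `L₀^φ / (C × {0})`. -/
def L0Quot (φ : ℝ → ℝ) : Type := Quotient (L0Setoid φ)

instance (φ : ℝ → ℝ) : TopologicalSpace (L0Quot φ) :=
  inferInstanceAs (TopologicalSpace (Quotient (L0Setoid φ)))

/-- The quotient projection `L₀^φ → L₀^φ / (C × {0})`. -/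
def L0Proj (φ : ℝ → ℝ) : L0 φ → L0Quot φ := Quotient.mk (L0Setoid φ)

/-- The setoid on `E × [0,1]` identifying `E × {0}` to a point. -/
def coneSetoid (E : Type*) : Setoid (E × Set.Icc (0:ℝ) 1) where
  r a b := a = b ∨ ((a.2 : ℝ) = 0 ∧ (b.2 : ℝ) = 0)
  iseqv := by
    constructor
    · exact fun _ => Or.inl rfl
    · rintro a b (rfl | ⟨h1, h2⟩)
      · exact Or.inl rfl
      · exact Or.inr ⟨h2, h1⟩
    · rintro a b c (rfl | ⟨h1, h2⟩) (rfl | ⟨h3, h4⟩)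
      · exact Or.inl rfl
      · exact Or.inr ⟨h3, h4⟩
      · exact Or.inr ⟨h1, h2⟩
      · exact Or.inr ⟨h1, h4⟩

/-- The cone over a space `E`: the quotient `(E × [0,1]) / (E × {0})`. -/
def Cone (E : Type*) [TopologicalSpace E] : Type _ := Quotient (coneSetoid E)

instance (E : Type*) [TopologicalSpace E] : TopologicalSpace (Cone E) :=
  inferInstanceAs (TopologicalSpace (Quotient (coneSetoid E)))

/-- A point of the one-point compactification of the disjoint union of the fans `X i`
is to be glued iff it is `∞` or the vertex of one of the fans. -/
def isGluedPoint {ι : Type*} (X : ι → Set (ℝ × ℝ)) :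
    OnePoint (Σ i : ι, X i) → Prop :=
  fun a => a.elim True (fun q => (q.2 : ℝ × ℝ) = fanVertex)

/-- The setoid gluing the vertices (and the point at infinity) of the fans `X i`. -/
def fanSumSetoid {ι : Type*} (X : ι → Set (ℝ × ℝ)) :
    Setoid (OnePoint (Σ i : ι, X i)) where
  r a b := a = b ∨ (isGluedPoint X a ∧ isGluedPoint X b)
  iseqv := by
    constructor
    · exact fun _ => Or.inl rfl
    · rintro a b (rfl | ⟨h1, h2⟩)
      · exact Or.inl rfl
      · exact Or.inr ⟨h2, h1⟩
    · rintro a b c (rfl | ⟨h1, h2⟩) (rfl | ⟨h3, h4⟩)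
      · exact Or.inl rfl
      · exact Or.inr ⟨h3, h4⟩
      · exact Or.inr ⟨h1, h2⟩
      · exact Or.inr ⟨h1, h4⟩

/-- The sum `Σᵢ Xᵢ` of a (finite or countably infinite) family of smooth fans: the quotient of
the one-point compactification of their disjoint union identifying the set consisting of all
the vertices and the point at infinity to a single point.  (For a finite family, `∞` is an
isolated point which is absorbed by the vertex class, so this agrees with the quotient of the
plain disjoint union identifying the vertices.) -/
def FanSum {ι : Type*} (X : ι → Set (ℝ × ℝ)) : Type _ := Quotient (fanSumSetoid X)

instance {ι : Type*} (X : ι → Set (ℝ × ℝ)) : TopologicalSpace (FanSum X) :=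
  inferInstanceAs (TopologicalSpace (Quotient (fanSumSetoid X)))

/-! ### Lelek functions -/

/-- A Lelek function: a nonnegative upper semicontinuous function such that the points
`(y, φ y)` with `φ y > 0` are dense in the region `{(x, t) | 0 ≤ t ≤ φ x}`.  Density is phrased
with open boxes `U × (a, b)`; the alternative `a = 0` says that the support of `φ` is dense. -/
structure IsLelek {C : Type*} [TopologicalSpace C] (φ : C → ℝ) : Prop where
  usc : UpperSemicontinuous φ
  nonneg : ∀ x, 0 ≤ φ x
  dense : ∀ U : Set C, IsOpen U → ∀ x ∈ U, ∀ a b : ℝ, 0 ≤ a → a < b → (a < φ x ∨ a = 0) →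
    ∃ y ∈ U, a < φ y ∧ φ y < b

/-- The part of the graph of `φ` lying strictly above height `0`. -/
def PosGraph {C : Type*} (φ : C → ℝ) : Set (C × ℝ) := {q | 0 < q.2 ∧ q.2 = φ q.1}

/-- The supremum of `φ` on `V`. It is a maximum when `φ` is upper semicontinuous and `V` is
compact and nonempty; only such `V` are used. -/
def mx {C : Type*} (φ : C → ℝ) (V : Set C) : ℝ := sSup (φ '' V)

/-- Logarithm of the ratio of the maxima of `ψ` on `V` and `φ` on `U`. -/
def logRatio {C D : Type*} (φ : C → ℝ) (ψ : D → ℝ) (U : Set C) (V : Set D) : ℝ :=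
  Real.log (mx ψ V) - Real.log (mx φ U)

section Splitting

variable {C D : Type*} [TopologicalSpace C] [TopologicalSpace D]

lemma usc_isOpen {φ : C → ℝ} (h : UpperSemicontinuous φ) (r : ℝ) : IsOpen {x | φ x < r} :=
  h.isOpen r

lemma exists_mx [CompactSpace C] {φ : C → ℝ} (h : UpperSemicontinuous φ) {V : Set C}
    (hV : IsClosed V) (hne : V.Nonempty) :
    ∃ x ∈ V, φ x = mx φ V ∧ ∀ y ∈ V, φ y ≤ mx φ V := by
  obtain ⟨x, hx, hm⟩ := UpperSemicontinuousOn.exists_isMaxOn hne hV.isCompact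
    (h.upperSemicontinuousOn V)
  have hg : IsGreatest (φ '' V) (φ x) := by
    refine ⟨⟨x, hx, rfl⟩, ?_⟩
    rintro _ ⟨y, hy, rfl⟩
    exact hm hy
  have e : mx φ V = φ x := hg.csSup_eq
  exact ⟨x, hx, e.symm, fun y hy => e ▸ hm hy⟩

lemma le_mx [CompactSpace C] {φ : C → ℝ} (h : UpperSemicontinuous φ) {V : Set C}
    (hV : IsClosed V) {x : C} (hx : x ∈ V) : φ x ≤ mx φ V := by
  obtain ⟨_, _, _, h3⟩ := exists_mx h hV ⟨x, hx⟩
  exact h3 x hx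

lemma mx_mono [CompactSpace C] {φ : C → ℝ} (h : UpperSemicontinuous φ) {V W : Set C}
    (hV : IsClosed V) (hW : IsClosed W) (hne : V.Nonempty) (hVW : V ⊆ W) : mx φ V ≤ mx φ W := by
  obtain ⟨x, hx, h2, _⟩ := exists_mx h hV hne
  rw [← h2]
  exact le_mx h hW (hVW hx)

lemma mx_pos [CompactSpace C] {φ : C → ℝ} (h : IsLelek φ) {V : Set C}
    (hV : IsClopen V) (hne : V.Nonempty) : 0 < mx φ V := by
  obtain ⟨x, hx⟩ := hne
  obtain ⟨y, hy, h1, _⟩ := h.dense V hV.isOpen x hx 0 1 le_rfl one_pos (Or.inr rfl)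
  exact h1.trans_le (le_mx h.usc hV.isClosed hy)

/-- Splitting a clopen set `V`: any value `t` up to the maximum of `ψ` on `V` is, up to a factor
`exp (-ε)`, the maximum of `ψ` on a clopen `W ⊆ V` whose removal does not lower the maximum. -/
lemma exists_split [CompactSpace D] [T2Space D] [TotallyDisconnectedSpace D] {ψ : D → ℝ}
    (h : IsLelek ψ) {V : Set D} (hV : IsClopen V) (hne : V.Nonempty) {t ε : ℝ} (ht : 0 < t)
    (htV : t ≤ mx ψ V) (hε : 0 < ε) :
    ∃ W ⊆ V, IsClopen W ∧ W.Nonempty ∧ (V \ W).Nonempty ∧ mx ψ (V \ W) = mx ψ V ∧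
      |Real.log (mx ψ W) - Real.log t| ≤ ε := by
  obtain ⟨y₀, hy₀, hm, hle⟩ := exists_mx h.usc hV.isClosed hne
  have hexp : Real.exp (-ε) < 1 := by simpa using hε
  have hlow : 0 < Real.exp (-ε) * t := mul_pos (Real.exp_pos _) ht
  have hlt : Real.exp (-ε) * t < t := by nlinarith
  -- the strict upper bound `ψ y < t ≤ ψ y₀` keeps `y` and its neighbourhood `W` away from `y₀`
  obtain ⟨y, hyV, hy1, hy2⟩ := h.dense V hV.isOpen y₀ hy₀ _ t hlow.le hlt
    (Or.inl (by rw [hm]; linarith))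
  obtain ⟨W, hWc, hyW, hW⟩ := compact_exists_isClopen_in_isOpen
    (hV.isOpen.inter (usc_isOpen h.usc t)) (show y ∈ V ∩ {x | ψ x < t} from ⟨hyV, hy2⟩)
  have hy₀W : y₀ ∈ V \ W := by
    refine ⟨hy₀, fun hc => ?_⟩
    have := (hW hc).2
    simp only [mem_ofPred_eq] at this
    linarith
  have hVW : IsClopen (V \ W) := hV.diff hWc
  refine ⟨W, fun x hx => (hW hx).1, hWc, ⟨y, hyW⟩, ⟨y₀, hy₀W⟩, le_antisymm ?_ ?_, ?_⟩
  · exact mx_mono h.usc hVW.isClosed hV.isClosed ⟨y₀, hy₀W⟩ sdiff_subset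
  · rw [← hm]
    exact le_mx h.usc hVW.isClosed hy₀W
  · obtain ⟨z, hz, hz1, _⟩ := exists_mx h.usc hWc.isClosed ⟨y, hyW⟩
    have h1 : mx ψ W < t := by rw [← hz1]; exact (hW hz).2
    have h2 : Real.exp (-ε) * t < mx ψ W := hy1.trans_le (le_mx h.usc hWc.isClosed hyW)
    have h3 := Real.log_lt_log hlow h2
    rw [Real.log_mul (Real.exp_pos _).ne' ht.ne', Real.log_exp] at h3
    have h4 := Real.log_lt_log (hlow.trans h2) h1
    rw [abs_le]
    constructor <;> linarith

/-- One matched pair `(U, V)` of clopen sets: a clopen splitting `U = (U ∩ A) ∪ (U \ A)` can be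
copied by a splitting of `V`, changing the logarithmic ratio of maxima by at most `ε`. -/
lemma exists_match [CompactSpace C] [CompactSpace D] [T2Space D] [TotallyDisconnectedSpace D]
    {φ : C → ℝ} {ψ : D → ℝ} (hφ : IsLelek φ) (hψ : IsLelek ψ) {U A : Set C} {V : Set D}
    (hU : IsClopen U) (hUn : U.Nonempty) (hA : IsClopen A) (hV : IsClopen V) (hVne : V.Nonempty)
    {ε : ℝ} (hε : 0 < ε) :
    ∃ B : Set D, IsClopen B ∧ ((U ∩ A).Nonempty ↔ (V ∩ B).Nonempty) ∧
      ((U \ A).Nonempty ↔ (V \ B).Nonempty) ∧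
      ((U ∩ A).Nonempty → |logRatio φ ψ (U ∩ A) (V ∩ B) - logRatio φ ψ U V| ≤ ε) ∧
      ((U \ A).Nonempty → |logRatio φ ψ (U \ A) (V \ B) - logRatio φ ψ U V| ≤ ε) := by
  rcases (U ∩ A).eq_empty_or_nonempty with h0 | h1
  · have e : U \ A = U := by rw [← sdiff_inter_self_eq_sdiff, inter_comm A U, h0, sdiff_empty]
    exact ⟨∅, isClopen_empty, by simp [h0], by simp [e, hUn, hVne], by simp [h0],
      by simp [e, hε.le]⟩
  rcases (U \ A).eq_empty_or_nonempty with h0 | h2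
  · have e : U ∩ A = U := by rw [inter_eq_left, ← sdiff_eq_empty]; exact h0
    exact ⟨univ, isClopen_univ, by simp [e, hUn, hVne], by simp [h0], by simp [e, hε.le],
      by simp [h0]⟩
  have hcA : IsClopen (U ∩ A) := hU.inter hA
  have hcA' : IsClopen (U \ A) := hU.diff hA
  have pU := mx_pos hφ hU hUn
  have pV := mx_pos hψ hV hVne
  have p1 := mx_pos hφ hcA h1
  have p2 := mx_pos hφ hcA' h2
  -- a piece with maximum `s` must correspond to a piece of `V` with maximum about `s * mV / mU`
  have key : ∀ s : ℝ, 0 < s → s ≤ mx φ U → ∃ W ⊆ V, IsClopen W ∧ W.Nonempty ∧ (V \ W).Nonempty ∧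
      mx ψ (V \ W) = mx ψ V ∧ |Real.log (mx ψ W) - Real.log s - logRatio φ ψ U V| ≤ ε := by
    intro s hs hsU
    obtain ⟨W, a1, a2, a3, a4, a5, a6⟩ := exists_split hψ hV hVne (t := s * (mx ψ V / mx φ U))
      (by positivity) (by rw [mul_div_assoc', div_le_iff₀ pU]; nlinarith) hε
    refine ⟨W, a1, a2, a3, a4, a5, ?_⟩
    rw [Real.log_mul hs.ne' (by positivity), Real.log_div pV.ne' pU.ne'] at a6
    unfold logRatio
    convert a6 using 2
    ring
  obtain ⟨x, hx, hxm, _⟩ := exists_mx hφ.usc hU.isClosed hUn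
  by_cases hxA : x ∈ A
  · have e : mx φ (U ∩ A) = mx φ U := le_antisymm
      (mx_mono hφ.usc hcA.isClosed hU.isClosed h1 inter_subset_left)
      (hxm ▸ le_mx hφ.usc hcA.isClosed ⟨hx, hxA⟩)
    obtain ⟨W, a1, a2, a3, a4, a5, a6⟩ := key (mx φ (U \ A)) p2
      (mx_mono hφ.usc hcA'.isClosed hU.isClosed h2 sdiff_subset)
    have e1 : V ∩ Wᶜ = V \ W := rfl
    have e2 : V \ Wᶜ = W := by rw [sdiff_compl, inter_eq_right]; exact a1
    refine ⟨Wᶜ, a2.compl, by simp only [e1, h1, a4], by simp only [e2, h2, a3], fun _ => ?_,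
      fun _ => ?_⟩
    · simp [e1, logRatio, a5, e, hε.le]
    · rw [e2]
      exact a6
  · have e : mx φ (U \ A) = mx φ U := le_antisymm
      (mx_mono hφ.usc hcA'.isClosed hU.isClosed h2 sdiff_subset)
      (hxm ▸ le_mx hφ.usc hcA'.isClosed ⟨hx, hxA⟩)
    obtain ⟨W, a1, a2, a3, a4, a5, a6⟩ := key (mx φ (U ∩ A)) p1
      (mx_mono hφ.usc hcA.isClosed hU.isClosed h1 inter_subset_left)
    have e2 : V ∩ W = W := by rw [inter_eq_right]; exact a1
    refine ⟨W, a2, by simp only [e2, h1, a3], by simp only [h2, a4], fun _ => ?_, fun _ => ?_⟩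
    · rw [e2]
      exact a6
    · simp [logRatio, a5, e, hε.le]

end Splitting

/-! ### Uniqueness of Lelek functions -/

/-- A closed relation between compact Hausdorff spaces that is functional and total in both
directions is the graph of a homeomorphism. -/
lemma exists_homeo_of_rel {C D : Type*} [TopologicalSpace C] [TopologicalSpace D]
    [CompactSpace C] [T2Space C] [CompactSpace D] [T2Space D] {R : Set (C × D)}
    (hR : IsClosed R) (h1 : ∀ x, ∃! y, (x, y) ∈ R) (h2 : ∀ y, ∃! x, (x, y) ∈ R) :
    ∃ h : C ≃ₜ D, ∀ x, (x, h x) ∈ R := by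
  choose f hf hf' using h1
  choose g hg hg' using h2
  have hc : Continuous f := by
    rw [continuous_iff_isClosed]
    intro s hs
    have e : f ⁻¹' s = Prod.fst '' (R ∩ Prod.snd ⁻¹' s) := by
      ext x
      constructor
      · exact fun hx => ⟨(x, f x), ⟨hf x, hx⟩, rfl⟩
      · rintro ⟨⟨x', y⟩, ⟨hr, hy⟩, rfl⟩
        have : y = f x' := hf' x' y hr
        subst this
        exact hy
    rw [e]
    exact isClosedMap_fst_of_compactSpace _ (hR.inter (hs.preimage continuous_snd))
  let E : C ≃ D :=
    { toFun := f
      invFun := g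
      left_inv := fun x => (hg' (f x) x (hf x)).symm
      right_inv := fun y => (hf' (g y) y (hg y)).symm }
  exact ⟨Continuous.homeoOfEquivCompactToT2 (f := E) hc, hf⟩

section Uniqueness

variable {C D : Type*} [TopologicalSpace C] [TopologicalSpace D]

/-- A finite stage of the back-and-forth construction: matched clopen partitions of `C` and `D`,
given by locally constant labelings with the same labels. -/
structure Stage (C D : Type*) [TopologicalSpace C] [TopologicalSpace D] where
  f : C → ℕ
  g : D → ℕ
  hf : Continuous f
  hg : Continuous g
  range_eq : range f = range g

namespace Stage

/-- Exchange of the roles of the two spaces. -/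
def swap (s : Stage C D) : Stage D C := ⟨s.g, s.f, s.hg, s.hf, s.range_eq.symm⟩

/-- The logarithmic ratio of the maxima of `ψ` and `φ` on the matched pieces with label `i`. -/
def L (φ : C → ℝ) (ψ : D → ℝ) (s : Stage C D) (i : ℕ) : ℝ :=
  logRatio φ ψ (s.f ⁻¹' {i}) (s.g ⁻¹' {i})

lemma L_swap (φ : C → ℝ) (ψ : D → ℝ) (s : Stage C D) (i : ℕ) :
    s.swap.L ψ φ i = - s.L φ ψ i := by
  simp [L, swap, logRatio]

/-- The stage `s'` refines `s`, and the logarithmic ratios change by at most `ε`. -/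
structure Refines (φ : C → ℝ) (ψ : D → ℝ) (ε : ℝ) (s s' : Stage C D) : Prop where
  rel : ∀ x y, s'.f x = s'.g y → s.f x = s.g y
  left : ∀ x x', s'.f x = s'.f x' → s.f x = s.f x'
  right : ∀ y y', s'.g y = s'.g y' → s.g y = s.g y'
  close : ∀ x, |s'.L φ ψ (s'.f x) - s.L φ ψ (s.f x)| ≤ ε

lemma Refines.swap {φ : C → ℝ} {ψ : D → ℝ} {ε : ℝ} {s s' : Stage C D}
    (h : Refines φ ψ ε s s') : Refines ψ φ ε s.swap s'.swap := by
  refine ⟨fun x y e => (h.rel y x e.symm).symm, h.right, h.left, fun y => ?_⟩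
  obtain ⟨x, hx⟩ : s'.g y ∈ range s'.f := s'.range_eq ▸ mem_range_self y
  have := h.close x
  rw [h.rel x y hx, hx] at this
  rw [L_swap, L_swap, ← abs_neg]
  convert this using 2
  simp only [Stage.swap]
  ring

lemma Refines.trans {φ : C → ℝ} {ψ : D → ℝ} {ε δ : ℝ} {s s' s'' : Stage C D}
    (h : Refines φ ψ ε s s') (h' : Refines φ ψ δ s' s'') : Refines φ ψ (ε + δ) s s'' :=
  ⟨fun x y e => h.rel x y (h'.rel x y e), fun x y e => h.left x y (h'.left x y e),
    fun x y e => h.right x y (h'.right x y e), fun x => by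
      have h1 := abs_le.1 (h.close x)
      have h2 := abs_le.1 (h'.close x)
      rw [abs_le]
      constructor <;> linarith [h1.1, h1.2, h2.1, h2.2]⟩

lemma isClopen_f (s : Stage C D) (i : ℕ) : IsClopen (s.f ⁻¹' {i}) :=
  (isClopen_discrete _).preimage s.hf

lemma isClopen_g (s : Stage C D) (i : ℕ) : IsClopen (s.g ⁻¹' {i}) :=
  (isClopen_discrete _).preimage s.hg

variable [CompactSpace C] [CompactSpace D] [T2Space D] [TotallyDisconnectedSpace D]

open Classical in
/-- The label of a point after splitting every piece along `A`. -/
def splitLabel {X : Type*} (f : X → ℕ) (A : Set X) (x : X) : ℕ :=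
  Nat.pair (f x) (if x ∈ A then 1 else 0)

lemma splitLabel_eq {X Y : Type*} {f : X → ℕ} {g : Y → ℕ} {A : Set X} {B : Set Y} {x : X} {y : Y} :
    splitLabel f A x = splitLabel g B y ↔ f x = g y ∧ (x ∈ A ↔ y ∈ B) := by
  unfold splitLabel
  rw [Nat.pair_eq_pair]
  by_cases hx : x ∈ A <;> by_cases hy : y ∈ B <;> simp [hx, hy]

lemma continuous_splitLabel {X : Type*} [TopologicalSpace X] {f : X → ℕ} (hf : Continuous f)
    {A : Set X} (hA : IsClopen A) :
    Continuous (splitLabel f A) := by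
  classical
  have h2 : Continuous fun x => if x ∈ A then (1 : ℕ) else 0 :=
    continuous_const.if (fun x hx => by
      have h0 : frontier {x | x ∈ A} = ∅ := hA.frontier_eq
      rw [h0] at hx
      exact hx.elim) continuous_const
  exact (continuous_of_discreteTopology (f := fun p : ℕ × ℕ => Nat.pair p.1 p.2)).comp
    (hf.prodMk h2)

/-- Splitting all pieces of `C` along a clopen `A`, and copying the splitting in `D`. -/
lemma exists_refine_left {φ : C → ℝ} {ψ : D → ℝ} (hφ : IsLelek φ) (hψ : IsLelek ψ)
    (s : Stage C D) {A : Set C} (hA : IsClopen A) {ε : ℝ} (hε : 0 < ε) :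
    ∃ s' : Stage C D, Refines φ ψ ε s s' ∧ ∀ x x', s'.f x = s'.f x' → (x ∈ A ↔ x' ∈ A) := by
  have H : ∀ i : ℕ, ∃ B : Set D, IsClopen B ∧ (i ∈ range s.f →
      (((s.f ⁻¹' {i}) ∩ A).Nonempty ↔ ((s.g ⁻¹' {i}) ∩ B).Nonempty) ∧
      (((s.f ⁻¹' {i}) \ A).Nonempty ↔ ((s.g ⁻¹' {i}) \ B).Nonempty) ∧
      (((s.f ⁻¹' {i}) ∩ A).Nonempty →
        |logRatio φ ψ ((s.f ⁻¹' {i}) ∩ A) ((s.g ⁻¹' {i}) ∩ B) - s.L φ ψ i| ≤ ε) ∧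
      (((s.f ⁻¹' {i}) \ A).Nonempty →
        |logRatio φ ψ ((s.f ⁻¹' {i}) \ A) ((s.g ⁻¹' {i}) \ B) - s.L φ ψ i| ≤ ε)) := by
    intro i
    by_cases hi : i ∈ range s.f
    · have hi' : i ∈ range s.g := s.range_eq ▸ hi
      obtain ⟨B, h1, h2⟩ := exists_match hφ hψ (s.isClopen_f i)
        (by obtain ⟨x, hx⟩ := hi; exact ⟨x, hx⟩) hA
        (s.isClopen_g i) (by obtain ⟨x, hx⟩ := hi'; exact ⟨x, hx⟩) hε
      exact ⟨B, h1, fun _ => h2⟩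
    · exact ⟨∅, isClopen_empty, fun h => absurd h hi⟩
  choose B hB hBi using H
  let B' : Set D := {y | y ∈ B (s.g y)}
  have hB' : IsClopen B' := by
    have e1 : B' = ⋃ i, (s.g ⁻¹' {i}) ∩ B i := by
      ext y; simp [B']
    have e2 : B'ᶜ = ⋃ i, (s.g ⁻¹' {i}) ∩ (B i)ᶜ := by
      ext y; simp [B']
    refine ⟨⟨?_⟩, ?_⟩
    · rw [e2]
      exact isOpen_iUnion fun i => (s.isClopen_g i).isOpen.inter (hB i).compl.isOpen
    · rw [e1]
      exact isOpen_iUnion fun i => (s.isClopen_g i).isOpen.inter (hB i).isOpen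
  have i1 : ∀ i, (s.g ⁻¹' {i}) ∩ B' = (s.g ⁻¹' {i}) ∩ B i := by
    intro i; ext y
    simp only [B', mem_inter_iff, mem_preimage, mem_singleton_iff, mem_ofPred_eq]
    exact ⟨fun ⟨a, b⟩ => ⟨a, a ▸ b⟩, fun ⟨a, b⟩ => ⟨a, a.symm ▸ b⟩⟩
  have i2 : ∀ i, (s.g ⁻¹' {i}) \ B' = (s.g ⁻¹' {i}) \ B i := by
    intro i; ext y
    simp only [B', mem_sdiff, mem_preimage, mem_singleton_iff, mem_ofPred_eq]
    exact ⟨fun ⟨a, b⟩ => ⟨a, a ▸ b⟩, fun ⟨a, b⟩ => ⟨a, a.symm ▸ b⟩⟩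
  have ff : ∀ x, (splitLabel s.f A) ⁻¹' {splitLabel s.f A x} =
      {z | s.f z = s.f x ∧ (z ∈ A ↔ x ∈ A)} := by
    intro x; ext z; simp [splitLabel_eq]
  have fg : ∀ x, (splitLabel s.g B') ⁻¹' {splitLabel s.f A x} =
      {z | s.g z = s.f x ∧ (z ∈ B' ↔ x ∈ A)} := by
    intro x; ext z; simp [splitLabel_eq]
  have hin : ∀ x, x ∈ A → ((s.f ⁻¹' {s.f x}) ∩ A).Nonempty := fun x hx => ⟨x, rfl, hx⟩
  have hout : ∀ x, x ∉ A → ((s.f ⁻¹' {s.f x}) \ A).Nonempty := fun x hx => ⟨x, rfl, hx⟩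
  have hr : range (splitLabel s.f A) = range (splitLabel s.g B') := by
    apply Subset.antisymm
    · rintro _ ⟨x, rfl⟩
      have hb := hBi (s.f x) (mem_range_self x)
      by_cases hx : x ∈ A
      · have := hb.1.1 (hin x hx)
        rw [← i1] at this
        obtain ⟨y, hy1, hy2⟩ := this
        exact ⟨y, splitLabel_eq.2 ⟨hy1, by simp [hx, hy2]⟩⟩
      · have := hb.2.1.1 (hout x hx)
        rw [← i2] at this
        obtain ⟨y, hy1, hy2⟩ := this
        exact ⟨y, splitLabel_eq.2 ⟨hy1, by simp [hx, hy2]⟩⟩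
    · rintro _ ⟨y, rfl⟩
      have hb := hBi (s.g y) (s.range_eq ▸ mem_range_self y)
      rw [← i1, ← i2] at hb
      by_cases hy : y ∈ B'
      · obtain ⟨x, hx1, hx2⟩ := hb.1.2 ⟨y, rfl, hy⟩
        exact ⟨x, splitLabel_eq.2 ⟨hx1, by simp [hx2, hy]⟩⟩
      · obtain ⟨x, hx1, hx2⟩ := hb.2.1.2 ⟨y, rfl, hy⟩
        exact ⟨x, splitLabel_eq.2 ⟨hx1, by simp [hx2, hy]⟩⟩
  refine ⟨⟨splitLabel s.f A, splitLabel s.g B', continuous_splitLabel s.hf hA,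
    continuous_splitLabel s.hg hB', hr⟩, ⟨fun x y e => (splitLabel_eq.1 e).1,
    fun x y e => (splitLabel_eq.1 e).1, fun x y e => (splitLabel_eq.1 e).1, fun x => ?_⟩,
    fun x y e => (splitLabel_eq.1 e).2⟩
  have hb := hBi (s.f x) (mem_range_self x)
  rw [← i1, ← i2] at hb
  change |logRatio φ ψ ((splitLabel s.f A) ⁻¹' {splitLabel s.f A x})
    ((splitLabel s.g B') ⁻¹' {splitLabel s.f A x}) - _| ≤ ε
  rw [ff, fg]
  by_cases hx : x ∈ A
  · simp only [hx, iff_true]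
    exact hb.2.2.1 (hin x hx)
  · simp only [hx, iff_false]
    exact hb.2.2.2 (hout x hx)

/-- Splitting along a clopen set of `C` and a clopen set of `D`. -/
lemma exists_refine [T2Space C] [TotallyDisconnectedSpace C] {φ : C → ℝ} {ψ : D → ℝ}
    (hφ : IsLelek φ) (hψ : IsLelek ψ) (s : Stage C D) {A : Set C} (hA : IsClopen A)
    {B : Set D} (hB : IsClopen B) {ε : ℝ} (hε : 0 < ε) :
    ∃ s' : Stage C D, Refines φ ψ ε s s' ∧ (∀ x x', s'.f x = s'.f x' → (x ∈ A ↔ x' ∈ A)) ∧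
      ∀ y y', s'.g y = s'.g y' → (y ∈ B ↔ y' ∈ B) := by
  obtain ⟨s', h1, h2⟩ := exists_refine_left hφ hψ s hA (half_pos hε)
  obtain ⟨s'', h3, h4⟩ := exists_refine_left hψ hφ s'.swap hB (half_pos hε)
  have h5 : Refines φ ψ (ε / 2) s' s''.swap := h3.swap
  refine ⟨s''.swap, ?_, fun x x' e => h2 x x' (h5.left x x' e), h4⟩
  have := h1.trans h5
  rwa [add_halves] at this

end Stage

open Stage Filter

/-- On a decreasing sequence of clopen sets shrinking to a point, the maxima of an upper
semicontinuous function converge to its value at the point. -/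
lemma tendsto_mx [CompactSpace C] [T2Space C] {φ : C → ℝ} (h : UpperSemicontinuous φ)
    {V : ℕ → Set C} (hV : ∀ n, IsClosed (V n)) (hanti : Antitone V) {x : C} (hx : ∀ n, x ∈ V n)
    (hsep : ∀ y, (∀ n, y ∈ V n) → y = x) : Tendsto (fun n => mx φ (V n)) atTop (𝓝 (φ x)) := by
  rw [tendsto_order]
  constructor
  · intro a ha
    exact Eventually.of_forall fun n => ha.trans_le (le_mx h (hV n) (hx n))
  · intro b hb
    obtain ⟨n, hn⟩ := exists_subset_nhds_of_isCompact hanti.directed_ge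
      (fun n => (hV n).isCompact) (U := {y | φ y < b}) (fun y hy => by
        rw [hsep y (mem_iInter.1 hy)]
        exact (usc_isOpen h b).mem_nhds hb)
    filter_upwards [eventually_ge_atTop n] with m hm
    obtain ⟨y, hy, hy1, _⟩ := exists_mx h (hV m) ⟨x, hx m⟩
    rw [← hy1]
    exact hn (hanti hm hy)

/-- Uniqueness of Lelek functions up to a homeomorphism of the domains and a continuous positive
factor (Dijkstra–van Mill). -/
theorem exists_homeo_of_isLelek [CompactSpace C] [T2Space C] [TotallyDisconnectedSpace C]
    [SecondCountableTopology C] [Nonempty C] [CompactSpace D] [T2Space D]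
    [TotallyDisconnectedSpace D] [SecondCountableTopology D] [Nonempty D]
    {φ : C → ℝ} {ψ : D → ℝ} (hφ : IsLelek φ) (hψ : IsLelek ψ) :
    ∃ h : C ≃ₜ D, ∃ α : C → ℝ, Continuous α ∧ (∀ x, 0 < α x) ∧ ∀ x, ψ (h x) = α x * φ x := by
  have : Countable (TopologicalSpace.Clopens C) :=
    TopologicalSpace.Clopens.countable_iff_secondCountable.2 inferInstance
  have : Countable (TopologicalSpace.Clopens D) :=
    TopologicalSpace.Clopens.countable_iff_secondCountable.2 inferInstance
  obtain ⟨A, hA⟩ := exists_surjective_nat (TopologicalSpace.Clopens C)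
  obtain ⟨B, hB⟩ := exists_surjective_nat (TopologicalSpace.Clopens D)
  have step : ∀ (n : ℕ) (s : Stage C D), ∃ s' : Stage C D, Refines φ ψ ((1 / 2 : ℝ) ^ n) s s' ∧
      (∀ x x', s'.f x = s'.f x' → (x ∈ (A n : Set C) ↔ x' ∈ (A n : Set C))) ∧
      ∀ y y', s'.g y = s'.g y' → (y ∈ (B n : Set D) ↔ y' ∈ (B n : Set D)) := fun n s =>
    exists_refine hφ hψ s (A n).isClopen (B n).isClopen (by positivity)
  choose next hnext hnA hnB using step
  let s : ℕ → Stage C D := fun n => Nat.rec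
    ⟨fun _ => 0, fun _ => 0, continuous_const, continuous_const, by simp⟩ next n
  have hs : ∀ n, s (n + 1) = next n (s n) := fun _ => rfl
  have href : ∀ n, Refines φ ψ ((1 / 2 : ℝ) ^ n) (s n) (s (n + 1)) := fun n => hnext n (s n)
  have sepC : ∀ x x', (∀ n, (s n).f x = (s n).f x') → x = x' := by
    intro x x' hxx
    by_contra hne
    obtain ⟨U, hU, h1, h2⟩ := exists_isClopen_of_totally_separated hne
    obtain ⟨n, hn⟩ := hA ⟨U, hU⟩
    have := hnA n (s n) x x' (hxx (n + 1))
    rw [hn] at this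
    exact h2 (this.1 h1)
  have sepD : ∀ y y', (∀ n, (s n).g y = (s n).g y') → y = y' := by
    intro x x' hxx
    by_contra hne
    obtain ⟨U, hU, h1, h2⟩ := exists_isClopen_of_totally_separated hne
    obtain ⟨n, hn⟩ := hB ⟨U, hU⟩
    have := hnB n (s n) x x' (hxx (n + 1))
    rw [hn] at this
    exact h2 (this.1 h1)
  have antiC : ∀ x, Antitone fun n => (s n).f ⁻¹' {(s n).f x} := fun x =>
    antitone_nat_of_succ_le fun n z hz => (href n).left z x hz
  have antiD : ∀ y, Antitone fun n => (s n).g ⁻¹' {(s n).g y} := fun y =>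
    antitone_nat_of_succ_le fun n z hz => (href n).right z y hz
  -- the limit relation `{(x, y) | x and y have the same label at every stage}`
  let R : Set (C × D) := {q | ∀ n, (s n).f q.1 = (s n).g q.2}
  have hR : IsClosed R := by
    have : R = ⋂ n, {q : C × D | (s n).f q.1 = (s n).g q.2} := by ext q; simp [R]
    rw [this]
    exact isClosed_iInter fun n => isClosed_eq ((s n).hf.comp continuous_fst)
      ((s n).hg.comp continuous_snd)
  have exD : ∀ x, ∃ y, (x, y) ∈ R := by
    intro x
    have hne : (⋂ n, (s n).g ⁻¹' {(s n).f x}).Nonempty :=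
      IsCompact.nonempty_iInter_of_sequence_nonempty_isCompact_isClosed
        (fun n => (s n).g ⁻¹' {(s n).f x}) (fun n y hy => ((href n).rel x y hy.symm).symm)
        (fun n => by
          obtain ⟨y, hy⟩ : (s n).f x ∈ range (s n).g := (s n).range_eq ▸ mem_range_self x
          exact ⟨y, hy⟩)
        ((s 0).isClopen_g _).isClosed.isCompact (fun n => ((s n).isClopen_g _).isClosed)
    obtain ⟨y, hy⟩ := hne
    exact ⟨y, fun n => (mem_iInter.1 hy n).symm⟩
  have exC : ∀ y, ∃ x, (x, y) ∈ R := by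
    intro y
    have hne : (⋂ n, (s n).f ⁻¹' {(s n).g y}).Nonempty :=
      IsCompact.nonempty_iInter_of_sequence_nonempty_isCompact_isClosed
        (fun n => (s n).f ⁻¹' {(s n).g y}) (fun n x hx => (href n).rel x y hx)
        (fun n => by
          obtain ⟨x, hx⟩ : (s n).g y ∈ range (s n).f := (s n).range_eq ▸ mem_range_self y
          exact ⟨x, hx⟩)
        ((s 0).isClopen_f _).isClosed.isCompact (fun n => ((s n).isClopen_f _).isClosed)
    obtain ⟨x, hx⟩ := hne
    exact ⟨x, fun n => mem_iInter.1 hx n⟩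
  obtain ⟨h, hh⟩ := exists_homeo_of_rel hR
    (fun x => by
      obtain ⟨y, hy⟩ := exD x
      exact ⟨y, hy, fun y' hy' => sepD _ _ fun n => (hy' n).symm.trans (hy n)⟩)
    (fun y => by
      obtain ⟨x, hx⟩ := exC y
      exact ⟨x, hx, fun x' hx' => sepC _ _ fun n => (hx' n).trans (hx n).symm⟩)
  -- the logarithmic ratios converge uniformly, hence to a continuous function
  let ℓ : ℕ → C → ℝ := fun n x => (s n).L φ ψ ((s n).f x)
  have hℓc : ∀ n, Continuous (ℓ n) := fun n =>
    (continuous_of_discreteTopology (f := fun i => (s n).L φ ψ i)).comp (s n).hf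
  have hℓd : ∀ x n, dist (ℓ n x) (ℓ (n + 1) x) ≤ 1 * (1 / 2 : ℝ) ^ n := fun x n => by
    rw [dist_comm, Real.dist_eq, one_mul]
    exact (href n).close x
  have hcau : ∀ x, ∃ l, Tendsto (fun n => ℓ n x) atTop (𝓝 l) := fun x =>
    cauchySeq_tendsto_of_complete (cauchySeq_of_le_geometric _ _ (by norm_num) (hℓd x))
  choose β hβ using hcau
  have hunif : TendstoUniformly ℓ β atTop := by
    rw [Metric.tendstoUniformly_iff]
    intro ε hε
    have ht : Tendsto (fun n : ℕ => 1 * (1 / 2 : ℝ) ^ n / (1 - 1 / 2)) atTop (𝓝 0) := by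
      have := (tendsto_pow_atTop_nhds_zero_of_lt_one (r := (1 / 2 : ℝ)) (by norm_num)
        (by norm_num)).const_mul (2 : ℝ)
      simp only [mul_zero] at this
      convert this using 2
      ring
    filter_upwards [ht.eventually_lt_const hε] with n hn x
    rw [dist_comm]
    exact (dist_le_of_le_geometric_of_tendsto _ _ (by norm_num) (hℓd x) (hβ x) n).trans_lt hn
  have hβc : Continuous β := hunif.continuous (Frequently.of_forall hℓc)
  refine ⟨h, fun x => Real.exp (β x), Real.continuous_exp.comp hβc, fun x => Real.exp_pos _,
    fun x => ?_⟩
  have t1 : Tendsto (fun n => mx φ ((s n).f ⁻¹' {(s n).f x})) atTop (𝓝 (φ x)) :=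
    tendsto_mx hφ.usc (fun n => ((s n).isClopen_f _).isClosed) (antiC x) (fun n => rfl)
      (fun y hy => sepC _ _ hy)
  have t2 : Tendsto (fun n => mx ψ ((s n).g ⁻¹' {(s n).g (h x)})) atTop (𝓝 (ψ (h x))) :=
    tendsto_mx hψ.usc (fun n => ((s n).isClopen_g _).isClosed) (antiD (h x)) (fun n => rfl)
      (fun y hy => sepD _ _ hy)
  have t3 := ((Real.continuous_exp.tendsto _).comp (hβ x)).mul t1
  refine tendsto_nhds_unique t2 (t3.congr fun n => ?_)
  have e : (s n).g (h x) = (s n).f x := (hh x n).symm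
  have p1 := mx_pos hφ ((s n).isClopen_f ((s n).f x)) ⟨x, rfl⟩
  have p2 := mx_pos hψ ((s n).isClopen_g ((s n).f x)) ⟨h x, e⟩
  simp only [Function.comp_apply, ℓ, Stage.L, logRatio, e]
  rw [Real.exp_sub, Real.exp_log p1, Real.exp_log p2, div_mul_cancel₀ _ p1.ne']

end Uniqueness

/-! ### Clopen subsets of graphs -/

section Graphs

open Filter

variable {C : Type*} [TopologicalSpace C] [CompactSpace C] [T2Space C]

/-- Every nonempty clopen subset of the positive graph of a Lelek function contains points of
arbitrarily small height.  (This is Erdős' argument: otherwise the closures of the clopen set and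
of its complement meet on every leg through the clopen set, and moving down along such meeting
points one converges to a point of the graph lying in both closures.) -/
lemma exists_low_of_isClopen {φ : C → ℝ} (h : IsLelek φ) {B : Set (PosGraph φ)} (hB : IsClopen B)
    (hne : B.Nonempty) {δ : ℝ} (hδ : 0 < δ) : ∃ q ∈ B, (q : C × ℝ).2 < δ := by
  by_contra! hlow
  let B0 : Set (C × ℝ) := Subtype.val '' B
  let B1 : Set (C × ℝ) := Subtype.val '' Bᶜ
  have mem_or : ∀ y, 0 < φ y → (y, φ y) ∈ B0 ∨ (y, φ y) ∈ B1 := by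
    intro y hy
    by_cases hq : (⟨(y, φ y), hy, rfl⟩ : PosGraph φ) ∈ B
    · exact Or.inl ⟨_, hq, rfl⟩
    · exact Or.inr ⟨_, hq, rfl⟩
  have cl0 : ∀ q ∈ closure B0, δ ≤ q.2 := by
    intro q hq
    refine closure_minimal ?_ (isClosed_le continuous_const continuous_snd) hq
    rintro _ ⟨q, hq, rfl⟩
    exact hlow q hq
  have hgr : ∀ q : PosGraph φ, (q : C × ℝ) ∈ closure B0 → (q : C × ℝ) ∈ closure B1 → False := by
    intro q h0 h1
    have h0' := closure_subtype.2 h0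
    have h1' := closure_subtype.2 h1
    rw [hB.isClosed.closure_eq] at h0'
    rw [hB.compl.isClosed.closure_eq] at h1'
    exact (h1' h0').elim
  -- the two closures meet on each leg ending in `B0`
  have leg : ∀ c, (c, φ c) ∈ B0 → ∃ t, t ≤ φ c ∧ (c, t) ∈ closure B0 ∧ (c, t) ∈ closure B1 := by
    intro c hc
    have hcδ : δ ≤ φ c := cl0 _ (subset_closure hc)
    have hcont : Continuous fun t : ℝ => (c, t) := by fun_prop
    have h0 : IsClosed {t : ℝ | (c, t) ∈ closure B0} := isClosed_closure.preimage hcont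
    have h1 : IsClosed {t : ℝ | (c, t) ∈ closure B1} := isClosed_closure.preimage hcont
    have hcov : Icc 0 (φ c) ⊆ {t : ℝ | (c, t) ∈ closure B0} ∪ {t : ℝ | (c, t) ∈ closure B1} := by
      rintro t ⟨ht0, ht1⟩
      rcases ht1.eq_or_lt with rfl | ht1
      · exact Or.inl (subset_closure hc)
      · change (c, t) ∈ closure B0 ∪ closure B1
        rw [← closure_union, mem_closure_iff_nhds]
        intro O hO
        obtain ⟨U, hU, W, hW, hUW⟩ := mem_nhds_prod_iff.1 hO
        obtain ⟨U', hU', hU'o, hcU'⟩ := mem_nhds_iff.1 hU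
        obtain ⟨ε, hε, hεW⟩ := Metric.mem_nhds_iff.1 hW
        obtain ⟨y, hy, hy1, hy2⟩ := h.dense U' hU'o c hcU' t (t + ε) ht0 (by linarith) (Or.inl ht1)
        refine ⟨(y, φ y), hUW ⟨hU' hy, hεW ?_⟩, mem_or y (by linarith)⟩
        rw [Metric.mem_ball, Real.dist_eq, abs_lt]
        constructor <;> linarith
    have h0c : (0 : ℝ) ∉ {t : ℝ | (c, t) ∈ closure B0} := fun hh =>
      absurd (cl0 _ hh) (not_le.2 hδ)
    have h00 : (0 : ℝ) ∈ Icc 0 (φ c) := ⟨le_rfl, by linarith⟩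
    obtain ⟨t, ht, ht0, ht1⟩ := (isPreconnected_closed_iff.1 isPreconnected_Icc) _ _ h0 h1 hcov
      ⟨φ c, ⟨by linarith, le_rfl⟩, subset_closure hc⟩ ⟨0, h00, (hcov h00).resolve_left h0c⟩
    exact ⟨t, ht.2, ht0, ht1⟩
  -- `p.1` is the current leg, `p.2` a closed neighbourhood containing all later legs
  let P := {p : C × Set C // p.2 ∈ 𝓝 p.1 ∧ IsClosed p.2 ∧ (p.1, φ p.1) ∈ B0}
  have step : ∀ (n : ℕ) (p : P), ∃ (p' : P) (t : ℝ), t ≤ φ p.1.1 ∧ (p.1.1, t) ∈ closure B0 ∧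
      (p.1.1, t) ∈ closure B1 ∧ |φ p'.1.1 - t| < (1 / 2 : ℝ) ^ n ∧ p'.1.2 ⊆ p.1.2 ∧
      ∀ x ∈ p'.1.2, φ x < φ p'.1.1 + (1 / 2 : ℝ) ^ n := by
    rintro n ⟨⟨c, U⟩, hU, hUc, hc⟩
    obtain ⟨t, ht, ht0, ht1⟩ := leg c hc
    have hpos : (0 : ℝ) < (1 / 2) ^ n := by positivity
    obtain ⟨q, ⟨hq1, hq2⟩, hq⟩ := mem_closure_iff_nhds.1 ht0 (interior U ×ˢ Metric.ball t ((1 / 2) ^ n))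
      (prod_mem_nhds (interior_mem_nhds.2 hU) (Metric.ball_mem_nhds _ hpos))
    have hqφ : q.2 = φ q.1 := by
      obtain ⟨q, _, rfl⟩ := hq
      exact q.2.2
    have hqe : q = (q.1, φ q.1) := by rw [← hqφ]
    have hnb : interior U ∩ {x | φ x < φ q.1 + (1 / 2 : ℝ) ^ n} ∈ 𝓝 q.1 :=
      (isOpen_interior.inter (usc_isOpen h.usc _)).mem_nhds ⟨hq1, by simp⟩
    obtain ⟨V, hV, hVc, hVs⟩ := exists_mem_nhds_isClosed_subset hnb
    refine ⟨⟨(q.1, V), hV, hVc, hqe ▸ hq⟩, t, ht, ht0, ht1, ?_,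
      fun x hx => interior_subset (hVs hx).1, fun x hx => (hVs hx).2⟩
    rw [← Real.dist_eq, ← hqφ]
    exact hq2
  choose next tt s1 s2 s3 s4 s5 s6 using step
  obtain ⟨q0, hq0⟩ := hne
  let p : ℕ → P := fun n => Nat.rec ⟨((q0 : C × ℝ).1, univ), univ_mem, isClosed_univ, by
    have := q0.2.2
    rw [← this]
    exact ⟨q0, hq0, rfl⟩⟩ next n
  have hp : ∀ n, p (n + 1) = next n (p n) := fun _ => rfl
  let c : ℕ → C := fun n => (p n).1.1
  let U : ℕ → Set C := fun n => (p n).1.2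
  let t : ℕ → ℝ := fun n => tt n (p n)
  have hUanti : Antitone U := antitone_nat_of_succ_le fun n => s5 n (p n)
  have hcU : ∀ n, c n ∈ U n := fun n => mem_of_mem_nhds (p n).2.1
  have hcB : ∀ n, (c n, φ (c n)) ∈ B0 := fun n => (p n).2.2.2
  have ht1 : ∀ n, t n ≤ φ (c n) := fun n => s1 n (p n)
  have ht2 : ∀ n, |φ (c (n + 1)) - t n| < (1 / 2 : ℝ) ^ n := fun n => s4 n (p n)
  have hp0 : Tendsto (fun n : ℕ => (1 / 2 : ℝ) ^ n) atTop (𝓝 0) :=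
    tendsto_pow_atTop_nhds_zero_of_lt_one (by norm_num) (by norm_num)
  -- the heights `φ (c n)` are decreasing up to a summable error
  obtain ⟨l, hl⟩ : ∃ l, Tendsto (fun n => φ (c n)) atTop (𝓝 l) := by
    have hanti : Antitone fun n => φ (c n) + 2 * (1 / 2 : ℝ) ^ n := by
      refine antitone_nat_of_succ_le fun n => ?_
      have h1 := (abs_lt.1 (ht2 n)).2
      have h2 := ht1 n
      rw [pow_succ]
      linarith
    have hbdd : BddBelow (range fun n => φ (c n) + 2 * (1 / 2 : ℝ) ^ n) := by
      refine ⟨0, ?_⟩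
      rintro _ ⟨n, rfl⟩
      have := h.nonneg (c n)
      positivity
    have h3 := (tendsto_atTop_ciInf hanti hbdd).sub (hp0.const_mul 2)
    exact ⟨_, h3.congr fun n => by ring⟩
  have hlδ : δ ≤ l := ge_of_tendsto' hl fun n => cl0 _ (subset_closure (hcB n))
  have htl : Tendsto t atTop (𝓝 l) := by
    have h1 : Tendsto (fun n => φ (c (n + 1)) - (1 / 2 : ℝ) ^ n) atTop (𝓝 l) := by
      simpa using ((tendsto_add_atTop_iff_nat 1).2 hl).sub hp0
    exact tendsto_of_tendsto_of_tendsto_of_le_of_le h1 hl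
      (fun n => by have := (abs_lt.1 (ht2 n)).2; simp only; linarith) ht1
  obtain ⟨x, -, hx⟩ := isCompact_univ.ultrafilter_le_nhds ((hyperfilter ℕ).map c) (by simp)
  have hx : Tendsto c (hyperfilter ℕ) (𝓝 x) := hx
  have hle : (hyperfilter ℕ : Filter ℕ) ≤ atTop := by
    rw [← Nat.cofinite_eq_atTop]
    exact hyperfilter_le_cofinite
  have hxU : ∀ n, x ∈ U n := fun n => (p n).2.2.1.mem_of_tendsto hx
    (hle ((eventually_ge_atTop n).mono fun m hm => hUanti hm (hcU m)))
  have hφl : φ x ≤ l := by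
    have h1 : Tendsto (fun n => φ (c (n + 1)) + (1 / 2 : ℝ) ^ n) atTop (𝓝 l) := by
      simpa using ((tendsto_add_atTop_iff_nat 1).2 hl).add hp0
    exact ge_of_tendsto' h1 fun n => (s6 n (p n) x (hxU (n + 1))).le
  have hlφ : l ≤ φ x := by
    by_contra! hlt
    obtain ⟨r, hr1, hr2⟩ := exists_between hlt
    have h2 : ∀ᶠ n in (hyperfilter ℕ : Filter ℕ), φ (c n) < r :=
      hx ((usc_isOpen h.usc r).mem_nhds hr1)
    exact absurd (le_of_tendsto (hl.mono_left hle) (h2.mono fun n hn => hn.le)) (not_le.2 hr2)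
  have hφx : φ x = l := le_antisymm hφl hlφ
  have hlim : Tendsto (fun n => (c n, t n)) (hyperfilter ℕ) (𝓝 (x, l)) :=
    hx.prodMk_nhds (htl.mono_left hle)
  exact hgr ⟨(x, l), by simp only; linarith, hφx.symm⟩
    (isClosed_closure.mem_of_tendsto hlim (Eventually.of_forall fun n => s2 n (p n)))
    (isClosed_closure.mem_of_tendsto hlim (Eventually.of_forall fun n => s3 n (p n)))

/-- The positive graph of a Lelek function has no points of zero-dimensionality. -/
lemma not_zeroDimPointAt {φ : C → ℝ} (h : IsLelek φ) (z : PosGraph φ) : ¬ ZeroDimPointAt z := by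
  intro hz
  have hz0 : 0 < (z : C × ℝ).2 := z.2.1
  have hc : Continuous fun q : PosGraph φ => (q : C × ℝ).2 := by fun_prop
  obtain ⟨V, hV, hzV, hVU⟩ := hz {q | (z : C × ℝ).2 / 2 < (q : C × ℝ).2}
    ((isOpen_lt continuous_const hc).mem_nhds (by simp only [mem_ofPred_eq]; linarith))
  obtain ⟨q, hq, hq'⟩ := exists_low_of_isClopen h hV ⟨z, hzV⟩ (half_pos hz0)
  have := hVU hq
  simp only [mem_ofPred_eq] at this
  linarith

lemma ZeroDimPointAt.map {X Y : Type*} [TopologicalSpace X] [TopologicalSpace Y] (e : X ≃ₜ Y)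
    {z : X} (hz : ZeroDimPointAt z) : ZeroDimPointAt (e z) := by
  intro U hU
  obtain ⟨V, hV, h1, h2⟩ := hz (e ⁻¹' U) (e.continuous.continuousAt hU)
  refine ⟨e.symm ⁻¹' V, hV.preimage e.symm.continuous, by simpa using h1, fun y hy => ?_⟩
  have := h2 hy
  simpa using this

/-- An upper semicontinuous real function on a nonempty Baire space has a point of lower
semicontinuity. -/
lemma exists_lsc_point {Z : Type*} [TopologicalSpace Z] [BaireSpace Z] [Nonempty Z] {φ : Z → ℝ}
    (h : UpperSemicontinuous φ) :
    ∃ x, ∀ r < φ x, ∀ᶠ y in 𝓝 x, r ≤ φ y := by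
  have hcl : ∀ q : ℚ, IsClosed {x | (q : ℝ) ≤ φ x} := fun q => by
    have := (usc_isOpen h q).isClosed_compl
    convert this using 1
    ext x
    simp
  have hd : Dense (⋂ q : ℚ, (frontier {x | (q : ℝ) ≤ φ x})ᶜ) :=
    dense_iInter_of_isOpen (fun q => isClosed_frontier.isOpen_compl) fun q => by
      rw [← interior_eq_empty_iff_dense_compl]
      exact interior_frontier (hcl q)
  obtain ⟨x, hx⟩ := hd.nonempty
  refine ⟨x, fun r hr => ?_⟩
  obtain ⟨q, hq1, hq2⟩ := exists_rat_btwn hr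
  have h1 : x ∉ frontier {x | (q : ℝ) ≤ φ x} := mem_iInter.1 hx q
  rw [(hcl q).frontier_eq] at h1
  have h2 : x ∈ interior {x | (q : ℝ) ≤ φ x} := by
    by_contra hc
    exact h1 ⟨hq2.le, hc⟩
  filter_upwards [mem_interior_iff_mem_nhds.1 h2] with y hy
  exact hq1.le.trans hy

/-- If a box `U × (a, b)` meeting the region under an upper semicontinuous function misses its
graph, then the graph has a point of zero-dimensionality, namely a point over which the
restriction of the function to a suitable compact set `{φ ≥ b}` is continuous. -/
lemma exists_zeroDimPointAt [TotallyDisconnectedSpace C] {φ : C → ℝ} (h : UpperSemicontinuous φ)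
    {U : Set C} (hU : IsOpen U) {x : C} (hx : x ∈ U) {a b : ℝ} (ha : 0 ≤ a) (hab : a < b)
    (hax : a < φ x) (hgap : ∀ y ∈ U, a < φ y → b ≤ φ y) : ∃ z : PosGraph φ, ZeroDimPointAt z := by
  obtain ⟨U', hU', hxU', hsub⟩ := compact_exists_isClopen_in_isOpen hU hx
  let N : Set C := U' ∩ {y | φ y < b}ᶜ
  have hNc : IsClosed N := hU'.isClosed.inter (usc_isOpen h b).isClosed_compl
  have hNiff : ∀ y, y ∈ N ↔ y ∈ U' ∧ a < φ y := by
    intro y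
    constructor
    · rintro ⟨h1, h2⟩
      simp only [mem_compl_iff, mem_ofPred_eq, not_lt] at h2
      exact ⟨h1, by linarith⟩
    · rintro ⟨h1, h2⟩
      exact ⟨h1, by simpa using hgap y (hsub h1) h2⟩
  have : CompactSpace N := isCompact_iff_compactSpace.1 hNc.isCompact
  have : Nonempty N := ⟨⟨x, (hNiff x).2 ⟨hxU', hax⟩⟩⟩
  obtain ⟨⟨w, hw⟩, hwl⟩ := exists_lsc_point (φ := fun y : N => φ y)
    (h.comp continuous_subtype_val)
  have hwpos : 0 < φ w := by linarith [((hNiff w).1 hw).2]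
  refine ⟨⟨(w, φ w), hwpos, rfl⟩, fun O hO => ?_⟩
  obtain ⟨O', hO', hOO⟩ := mem_nhds_subtype _ _ _ |>.1 hO
  obtain ⟨W, hW, T, hT, hWT⟩ := mem_nhds_prod_iff.1 hO'
  obtain ⟨ε, hε, hεT⟩ := Metric.mem_nhds_iff.1 hT
  -- a neighbourhood of `w` in `C` on whose intersection with `N` the values of `φ` stay in `T`
  have e1 : ∀ᶠ y in 𝓝 w, y ∈ N → φ w - ε / 2 ≤ φ y := by
    have := hwl (φ w - ε / 2) (by simp only; linarith)
    rw [nhds_subtype_eq_comap, eventually_comap] at this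
    filter_upwards [this] with y hy hyN
    exact hy ⟨y, hyN⟩ rfl
  have e2 : ∀ᶠ y in 𝓝 w, φ y < φ w + ε := (usc_isOpen h _).mem_nhds (by simpa using hε)
  obtain ⟨Q, hQ, hQo, hwQ⟩ := mem_nhds_iff.1 (inter_mem hW (inter_mem e1 e2))
  obtain ⟨Z, hZ, hwZ, hZQ⟩ := compact_exists_isClopen_in_isOpen hQo hwQ
  have hf : Continuous fun q : PosGraph φ => (q : C × ℝ).1 := by fun_prop
  have hs : Continuous fun q : PosGraph φ => (q : C × ℝ).2 := by fun_prop
  refine ⟨{q | (q : C × ℝ).1 ∈ Z ∧ (q : C × ℝ).1 ∈ N}, ⟨?_, ?_⟩, ⟨hwZ, hw⟩, ?_⟩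
  · exact (hZ.isClosed.preimage hf).inter (hNc.preimage hf)
  · have : {q : PosGraph φ | (q : C × ℝ).1 ∈ Z ∧ (q : C × ℝ).1 ∈ N} =
        {q : PosGraph φ | (q : C × ℝ).1 ∈ Z} ∩ ({q : PosGraph φ | (q : C × ℝ).1 ∈ U'} ∩
          {q : PosGraph φ | a < (q : C × ℝ).2}) := by
      ext q
      simp only [mem_ofPred_eq, mem_inter_iff, hNiff, q.2.2]
    rw [this]
    exact (hZ.isOpen.preimage hf).inter ((hU'.isOpen.preimage hf).inter
      (isOpen_lt continuous_const hs))
  · rintro ⟨⟨y, t⟩, hy0, hyt⟩ ⟨hyZ, hyN⟩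
    simp only at hy0 hyt hyZ hyN
    subst hyt
    obtain ⟨k1, k2, k3⟩ := hQ (hZQ hyZ)
    refine hOO (hWT ⟨k1, hεT ?_⟩)
    rw [Metric.mem_ball, Real.dist_eq, abs_lt]
    have k2 := k2 hyN
    simp only [mem_ofPred_eq] at k3
    constructor <;> linarith

end Graphs

/-! ### Complete Erdős space as a graph -/

section GraphHomeo

variable {C D : Type*} [TopologicalSpace C] [TopologicalSpace D]

/-- A homeomorphism of the domains matching two functions up to a continuous positive factor
induces a homeomorphism of their positive graphs. -/
def posGraphHomeo {φ : C → ℝ} {ψ : D → ℝ} (h : C ≃ₜ D) {α : C → ℝ} (hα : Continuous α)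
    (hpos : ∀ x, 0 < α x) (hφψ : ∀ x, ψ (h x) = α x * φ x) : PosGraph φ ≃ₜ PosGraph ψ where
  toFun q := ⟨(h (q : C × ℝ).1, α (q : C × ℝ).1 * (q : C × ℝ).2),
    mul_pos (hpos _) q.2.1, by simp only [hφψ, ← q.2.2]⟩
  invFun q := ⟨(h.symm (q : D × ℝ).1, (q : D × ℝ).2 / α (h.symm (q : D × ℝ).1)),
    div_pos q.2.1 (hpos _), by
      have := hφψ (h.symm (q : D × ℝ).1)
      rw [h.apply_symm_apply, ← q.2.2] at this
      simp only [this]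
      rw [mul_div_cancel_left₀ _ (hpos _).ne']⟩
  left_inv q := by
    ext
    · simp
    · simp [mul_div_cancel_left₀ _ (hpos _).ne']
  right_inv q := by
    ext
    · simp
    · simp [mul_div_cancel₀ _ (hpos _).ne']
  continuous_toFun := by fun_prop
  continuous_invFun := by
    have h1 : Continuous fun q : PosGraph ψ => α (h.symm (q : D × ℝ).1) := by fun_prop
    have h2 : Continuous fun q : PosGraph ψ => (q : D × ℝ).2 := by fun_prop
    have h3 : Continuous fun q : PosGraph ψ => h.symm (q : D × ℝ).1 := by fun_prop
    exact (h3.prodMk (h2.div h1 fun q => (hpos _).ne')).subtype_mk _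

end GraphHomeo

section Erdos

open Filter

/-- The set of values `{0} ∪ {1/m : m ≥ 1}` allowed for the coordinates of complete Erdős space. -/
def ErdosVal : Set ℝ := {s | s = 0 ∨ ∃ m : ℕ, 0 < m ∧ s = 1 / m}

lemma erdosVal_eq : ErdosVal = insert 0 (range fun n : ℕ => 1 / ((n : ℝ) + 1)) := by
  ext s
  simp only [ErdosVal, mem_ofPred_eq, mem_insert_iff, mem_range]
  refine or_congr_right ⟨?_, ?_⟩
  · rintro ⟨m, hm, rfl⟩
    refine ⟨m - 1, ?_⟩
    have : ((m - 1 : ℕ) : ℝ) = m - 1 := by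
      rw [Nat.cast_sub hm]
      simp
    rw [this, sub_add_cancel]
  · rintro ⟨n, rfl⟩
    exact ⟨n + 1, n.succ_pos, by push_cast; rfl⟩

instance : CompactSpace ErdosVal := by
  rw [← isCompact_iff_compactSpace, erdosVal_eq]
  exact tendsto_one_div_add_atTop_nhds_zero_nat.isCompact_insert_range

instance : Countable ErdosVal := by
  rw [erdosVal_eq]
  exact ((countable_range _).insert _).to_subtype

instance : TotallyDisconnectedSpace ErdosVal := inferInstance

/-- The compact product of which complete Erdős space is a subset. -/
abbrev ErdosProd : Type := ℕ → ErdosVal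

/-- The sum of the squares of the first `N` coordinates. -/
def partSq (N : ℕ) (x : ErdosProd) : ℝ := ∑ n ∈ Finset.range N, ((x n : ℝ)) ^ 2

lemma partSq_nonneg (N : ℕ) (x : ErdosProd) : 0 ≤ partSq N x :=
  Finset.sum_nonneg fun _ _ => sq_nonneg _

lemma partSq_mono (x : ErdosProd) : Monotone fun N => partSq N x :=
  monotone_nat_of_le_succ fun n => by
    simp only [partSq, Finset.sum_range_succ]
    nlinarith [sq_nonneg ((x n : ℝ))]

lemma continuous_partSq (N : ℕ) : Continuous (partSq N) := by
  unfold partSq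
  fun_prop

/-- The function `x ↦ 1 / (1 + ‖x‖²)` on the compact product, with value `0` where the norm is
infinite, written as an infimum over partial sums. -/
def erdosφ (x : ErdosProd) : ℝ := ⨅ N, 1 / (1 + partSq N x)

lemma erdos_bdd (x : ErdosProd) : BddBelow (range fun N => 1 / (1 + partSq N x)) := by
  refine ⟨0, ?_⟩
  rintro _ ⟨N, rfl⟩
  have := partSq_nonneg N x
  positivity

lemma erdosφ_nonneg (x : ErdosProd) : 0 ≤ erdosφ x :=
  le_ciInf fun N => by
    have := partSq_nonneg N x
    positivity

lemma erdosφ_le (x : ErdosProd) (N : ℕ) : erdosφ x ≤ 1 / (1 + partSq N x) :=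
  ciInf_le (erdos_bdd x) N

lemma erdosφ_tendsto (x : ErdosProd) :
    Tendsto (fun N => 1 / (1 + partSq N x)) atTop (𝓝 (erdosφ x)) :=
  tendsto_atTop_ciInf (fun M N h => one_div_le_one_div_of_le
    (by linarith [partSq_nonneg M x]) (by linarith [partSq_mono x h])) (erdos_bdd x)

lemma erdosφ_usc : UpperSemicontinuous erdosφ := by
  refine upperSemicontinuous_ciInf erdos_bdd fun N => Continuous.upperSemicontinuous ?_
  exact continuous_const.div (continuous_const.add (continuous_partSq N))
    fun x => by linarith [partSq_nonneg N x]

/-- Prescribing the first `N` coordinates, every value of `erdosφ` below the bound they impose is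
approximated: continue with many equal small coordinates `1 / m` and then zeros. -/
lemma erdos_approx (x : ErdosProd) (N : ℕ) {a b : ℝ} (ha : 0 ≤ a) (hab : a < b)
    (hax : a < 1 / (1 + partSq N x)) :
    ∃ y : ErdosProd, (∀ n < N, y n = x n) ∧ a < erdosφ y ∧ erdosφ y < b := by
  have hP := partSq_nonneg N x
  obtain ⟨t, hat, htb⟩ := exists_between (lt_min hab hax)
  obtain ⟨htb, htP⟩ := lt_min_iff.1 htb
  have ht : 0 < t := ha.trans_lt hat
  have hs : 0 ≤ 1 / t - (1 + partSq N x) := by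
    rw [lt_one_div ht (by linarith)] at htP
    linarith
  have h1 : Tendsto (fun m : ℕ => (m : ℝ) ^ 2) atTop atTop :=
    (tendsto_pow_atTop two_ne_zero).comp tendsto_natCast_atTop_atTop
  have h2 := (tendsto_nat_floor_mul_div_atTop hs).comp h1
  have h3 : Tendsto (fun m : ℕ => 1 / (1 + (partSq N x +
      (⌊(1 / t - (1 + partSq N x)) * (m : ℝ) ^ 2⌋₊ : ℝ) / (m : ℝ) ^ 2))) atTop (𝓝 t) := by
    have h4 := ((h2.const_add (partSq N x)).const_add 1)
    have e : 1 + (partSq N x + (1 / t - (1 + partSq N x))) = 1 / t := by ring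
    rw [e] at h4
    have h5 := h4.inv₀ (by positivity)
    simp only [one_div, inv_inv] at h5 ⊢
    exact h5
  obtain ⟨m, ⟨hm1, hm2⟩, hm⟩ := ((h3.eventually (Ioo_mem_nhds hat htb)).and
    (eventually_gt_atTop 0)).exists
  set k := ⌊(1 / t - (1 + partSq N x)) * (m : ℝ) ^ 2⌋₊ with hk
  let y : ErdosProd := fun n => if n < N then x n else if n < N + k then
    ⟨1 / m, Or.inr ⟨m, hm, rfl⟩⟩ else ⟨0, Or.inl rfl⟩
  have hy1 : ∀ n < N, y n = x n := fun n hn => by simp [y, hn]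
  have hyN : partSq N y = partSq N x :=
    Finset.sum_congr rfl fun n hn => by rw [hy1 n (Finset.mem_range.1 hn)]
  have hyk : partSq (N + k) y = partSq N x + k / (m : ℝ) ^ 2 := by
    rw [← hyN]
    unfold partSq
    rw [Finset.sum_range_add]
    congr 1
    rw [Finset.sum_congr rfl (g := fun _ => 1 / (m : ℝ) ^ 2)]
    · simp [div_eq_mul_inv]
    · intro i hi
      have := Finset.mem_range.1 hi
      simp [y, this]
  have hyM : ∀ M, N + k ≤ M → partSq M y = partSq N x + k / (m : ℝ) ^ 2 := by
    intro M hM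
    induction M, hM using Nat.le_induction with
    | base => exact hyk
    | succ M hM ih =>
      rw [partSq, Finset.sum_range_succ, ← partSq, ih]
      simp [y, show ¬ M < N by omega, show ¬ M < N + k by omega]
  have hφ : erdosφ y = 1 / (1 + (partSq N x + k / (m : ℝ) ^ 2)) := by
    refine tendsto_nhds_unique (erdosφ_tendsto y) (tendsto_const_nhds.congr' ?_)
    filter_upwards [eventually_ge_atTop (N + k)] with M hM
    rw [hyM M hM]
  exact ⟨y, hy1, by rw [hφ]; exact hm1, by rw [hφ]; exact hm2⟩

lemma isLelek_erdosφ : IsLelek erdosφ := by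
  refine ⟨erdosφ_usc, erdosφ_nonneg, fun U hU x hx a b ha hab hor => ?_⟩
  obtain ⟨I, u, hu, hsub⟩ := isOpen_pi_iff.1 hU x hx
  obtain ⟨N, hN⟩ : ∃ N, ∀ i ∈ I, i < N :=
    ⟨I.sup id + 1, fun i hi => Nat.lt_succ_of_le (Finset.le_sup (f := id) hi)⟩
  have hax : a < 1 / (1 + partSq N x) := by
    rcases hor with h | rfl
    · exact h.trans_le (erdosφ_le x N)
    · have := partSq_nonneg N x
      positivity
  obtain ⟨y, hy, h1, h2⟩ := erdos_approx x N ha hab hax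
  refine ⟨y, hsub fun i hi => ?_, h1, h2⟩
  rw [hy i (hN i hi)]
  exact (hu i hi).2

lemma lp_summable_sq (v : lp (fun _ : ℕ => ℝ) 2) : Summable fun n => (v n) ^ 2 := by
  have := (lp.memℓp v).summable (by norm_num)
  simpa using this

lemma lp_norm_sq (v : lp (fun _ : ℕ => ℝ) 2) : ‖v‖ ^ 2 = ∑' n, (v n) ^ 2 := by
  have := lp.norm_rpow_eq_tsum (p := 2) (by norm_num) v
  simpa using this

lemma memℓp_of_summable_sq {f : ℕ → ℝ} (hf : Summable fun n => (f n) ^ 2) :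
    Memℓp (E := fun _ : ℕ => ℝ) f 2 := by
  refine memℓp_gen ?_
  simpa using hf

/-- The coordinates of a point of complete Erdős space. -/
def erdosCoord (v : ErdosSpace) : ErdosProd := fun n => ⟨(v : lp (fun _ : ℕ => ℝ) 2) n, v.2 n⟩

lemma erdosφ_coord (v : ErdosSpace) : erdosφ (erdosCoord v) =
    1 / (1 + ‖(v : lp (fun _ : ℕ => ℝ) 2)‖ ^ 2) := by
  refine tendsto_nhds_unique (erdosφ_tendsto _) ?_
  have h1 := (lp_summable_sq v).hasSum.tendsto_sum_nat
  rw [← lp_norm_sq] at h1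
  exact tendsto_const_nhds.div (h1.const_add 1) (by positivity)

lemma summable_of_erdosφ_pos {x : ErdosProd} (hx : 0 < erdosφ x) :
    Summable fun n => (x n : ℝ) ^ 2 := by
  refine summable_of_sum_range_le (c := 1 / erdosφ x) (fun n => sq_nonneg _) fun N => ?_
  have h1 := erdosφ_le x N
  rw [le_one_div hx (by linarith [partSq_nonneg N x])] at h1
  change partSq N x ≤ _
  linarith

/-- The point of complete Erdős space with given square-summable coordinates. -/
def erdosPoint (q : PosGraph erdosφ) : ErdosSpace :=
  ⟨⟨fun n => ((q : ErdosProd × ℝ).1 n : ℝ), memℓp_of_summable_sq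
    (summable_of_erdosφ_pos (by rw [← q.2.2]; exact q.2.1))⟩, fun n => ((q : ErdosProd × ℝ).1 n).2⟩

lemma erdosCoord_point (q : PosGraph erdosφ) : erdosCoord (erdosPoint q) = (q : ErdosProd × ℝ).1 :=
  rfl

lemma erdosPoint_norm (q : PosGraph erdosφ) :
    ‖(erdosPoint q : lp (fun _ : ℕ => ℝ) 2)‖ ^ 2 = 1 / (q : ErdosProd × ℝ).2 - 1 := by
  have h := erdosφ_coord (erdosPoint q)
  rw [erdosCoord_point, ← q.2.2] at h
  rw [h, one_div_one_div]
  ring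

/-- Coordinatewise convergence together with convergence of the norms gives convergence in `ℓ²`;
as all coordinates are nonnegative, `‖v' - v‖²` is bounded by
`‖v'‖² + ‖v‖² - 2 ∑ n < N, v' n * v n` for every `N`. -/
lemma continuous_erdosPoint : Continuous erdosPoint := by
  refine Continuous.subtype_mk ?_ _
  rw [continuous_iff_continuousAt]
  intro q
  rw [ContinuousAt, Metric.tendsto_nhds]
  intro ε hε
  let v : PosGraph erdosφ → lp (fun _ : ℕ => ℝ) 2 := fun q => erdosPoint q
  have hv : ∀ q n, v q n = ((q : ErdosProd × ℝ).1 n : ℝ) := fun _ _ => rfl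
  have hvn : ∀ q, ‖v q‖ ^ 2 = 1 / (q : ErdosProd × ℝ).2 - 1 := erdosPoint_norm
  have hv0 : ∀ q n, 0 ≤ v q n := by
    intro q n
    rcases ((q : ErdosProd × ℝ).1 n).2 with h | ⟨m, hm, h⟩
    · rw [hv, h]
    · rw [hv, h]
      positivity
  have bound : ∀ (N : ℕ) (q' : PosGraph erdosφ), ‖v q' - v q‖ ^ 2 ≤
      ‖v q'‖ ^ 2 + ‖v q‖ ^ 2 - 2 * ∑ n ∈ Finset.range N, v q' n * v q n := by
    intro N q'
    have s1 := lp_summable_sq (v q')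
    have s2 := lp_summable_sq (v q)
    have s3 := lp_summable_sq (v q' - v q)
    have s4 : Summable fun n => v q' n * v q n := by
      refine ((s1.add s2).sub s3).div_const 2 |>.congr fun n => ?_
      simp only [lp.coeFn_sub, Pi.sub_apply]
      ring
    have e : ‖v q' - v q‖ ^ 2 = ‖v q'‖ ^ 2 + ‖v q‖ ^ 2 - 2 * ∑' n, v q' n * v q n := by
      rw [lp_norm_sq, lp_norm_sq, lp_norm_sq, ← s1.tsum_add s2, ← tsum_mul_left,
        ← (s1.add s2).tsum_sub (s4.mul_left 2)]
      refine tsum_congr fun n => ?_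
      simp only [lp.coeFn_sub, Pi.sub_apply]
      ring
    rw [e]
    have := s4.sum_le_tsum (Finset.range N) fun n _ => mul_nonneg (hv0 q' n) (hv0 q n)
    linarith
  obtain ⟨N, hN⟩ : ∃ N, ‖v q‖ ^ 2 - ε ^ 2 / 4 < ∑ n ∈ Finset.range N, (v q n) ^ 2 := by
    have h1 := (lp_summable_sq (v q)).hasSum.tendsto_sum_nat
    rw [← lp_norm_sq] at h1
    exact (h1.eventually (lt_mem_nhds (by have := pow_pos hε 2; linarith))).exists
  have hc : ContinuousAt (fun q' => ‖v q'‖ ^ 2 + ‖v q‖ ^ 2 -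
      2 * ∑ n ∈ Finset.range N, v q' n * v q n) q := by
    simp only [hvn, hv]
    have h0 : ContinuousAt (fun q' : PosGraph erdosφ => (q' : ErdosProd × ℝ).2) q := by fun_prop
    have h1 : ContinuousAt (fun q' : PosGraph erdosφ => 1 / (q' : ErdosProd × ℝ).2) q :=
      continuousAt_const.div h0 q.2.1.ne'
    fun_prop
  have hlt : ‖v q‖ ^ 2 + ‖v q‖ ^ 2 - 2 * ∑ n ∈ Finset.range N, v q n * v q n < ε ^ 2 := by
    simp only [← sq]
    have := pow_pos hε 2
    linarith
  filter_upwards [hc.eventually (gt_mem_nhds hlt)] with q' hq'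
  change dist (v q') (v q) < ε
  rw [dist_eq_norm]
  exact lt_of_pow_lt_pow_left₀ 2 hε.le ((bound N q').trans_lt hq')

/-- Complete Erdős space is the positive graph of `erdosφ`. -/
def erdosHomeo : ErdosSpace ≃ₜ PosGraph erdosφ where
  toFun v := ⟨(erdosCoord v, 1 / (1 + ‖(v : lp (fun _ : ℕ => ℝ) 2)‖ ^ 2)), by positivity,
    (erdosφ_coord v).symm⟩
  invFun := erdosPoint
  left_inv v := rfl
  right_inv q := by
    ext n
    · rfl
    · have h := erdosφ_coord (erdosPoint q)
      rw [erdosCoord_point, ← q.2.2] at h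
      exact h.symm
  continuous_toFun := by
    have h1 : Continuous erdosCoord := by
      refine continuous_pi fun n => Continuous.subtype_mk ?_ _
      exact (lp.evalCLM ℝ (fun _ : ℕ => ℝ) 2 n).continuous.comp continuous_subtype_val
    have h2 : Continuous fun v : ErdosSpace => 1 / (1 + ‖(v : lp (fun _ : ℕ => ℝ) 2)‖ ^ 2) :=
      continuous_const.div (by fun_prop) fun v => by positivity
    exact (h1.prodMk h2).subtype_mk _
  continuous_invFun := continuous_erdosPoint

end Erdos

/-! ### Legs of smooth fans -/

section Fans

open Filter

lemma isTotallyDisconnected_cantorSet' : IsTotallyDisconnected cantorSet := by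
  rw [← totallyDisconnectedSpace_subtype_iff]
  exact cantorSetHomeomorphNatToBool.symm.totallyDisconnectedSpace

lemma exists_notMem_cantorSet {a b : ℝ} (hab : a < b) : ∃ u ∈ Ioo a b, u ∉ cantorSet := by
  by_contra! h
  obtain ⟨c, hc⟩ := exists_between hab
  obtain ⟨d, hd⟩ := exists_between hc.2
  have := isTotallyDisconnected_cantorSet' (Ioo a b) h isPreconnected_Ioo hc
    ⟨hc.1.trans hd.1, hd.2⟩
  exact hd.1.ne this

lemma fan_bounds {q : ℝ × ℝ} (hq : q ∈ CantorFan) : 0 ≤ q.1 ∧ q.1 ≤ q.2 ∧ 0 ≤ q.2 ∧ q.2 ≤ 1 := by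
  obtain ⟨c, hc, t, ht, rfl⟩ := hq
  have := cantorSet_subset_unitInterval hc
  exact ⟨mul_nonneg ht.1 this.1, mul_le_of_le_one_right ht.1 this.2, ht.1, ht.2⟩

lemma fan_div_mem {q : ℝ × ℝ} (hq : q ∈ CantorFan) (h0 : 0 < q.2) : q.1 / q.2 ∈ cantorSet := by
  obtain ⟨c, hc, t, ht, rfl⟩ := hq
  rwa [mul_div_cancel_left₀ _ h0.ne']

lemma fan_eq_vertex {q : ℝ × ℝ} (hq : q ∈ CantorFan) (h0 : q.2 = 0) : q = fanVertex := by
  have := fan_bounds hq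
  ext
  · simp only [fanVertex]
    linarith
  · exact h0

lemma fan_eq {q : ℝ × ℝ} (h0 : 0 < q.2) : q = (q.2 * (q.1 / q.2), q.2) := by
  rw [mul_div_cancel₀ _ h0.ne']

/-- If a connected subset of the Cantor fan misses height `t` on all legs with slopes between
two gaps `u < v` of the Cantor set, then it lies above that level as soon as one of its points
does. -/
lemma fan_separation {A : Set (ℝ × ℝ)} (hA : A ⊆ CantorFan) (hc : IsPreconnected A) {u v t : ℝ}
    (hu : u ∉ cantorSet) (hv : v ∉ cantorSet) (ht : 0 < t)
    (hgap : ∀ q ∈ A, q.2 = t → u < q.1 / q.2 → ¬ q.1 / q.2 < v) {e : ℝ × ℝ} (he : e ∈ A)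
    (h1 : t < e.2) (h2 : u * e.2 < e.1) (h3 : e.1 < v * e.2) :
    ∀ b ∈ A, t < b.2 ∧ u * b.2 < b.1 ∧ b.1 < v * b.2 := by
  have o1 : IsOpen ({q : ℝ × ℝ | t < q.2} ∩ ({q | u * q.2 < q.1} ∩ {q | q.1 < v * q.2})) :=
    (isOpen_lt (by fun_prop) (by fun_prop)).inter
      ((isOpen_lt (by fun_prop) (by fun_prop)).inter (isOpen_lt (by fun_prop) (by fun_prop)))
  have o2 : IsOpen ({q : ℝ × ℝ | q.2 < t} ∪ ({q | q.1 < u * q.2} ∪ {q | v * q.2 < q.1})) :=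
    (isOpen_lt (by fun_prop) (by fun_prop)).union
      ((isOpen_lt (by fun_prop) (by fun_prop)).union (isOpen_lt (by fun_prop) (by fun_prop)))
  suffices h : A ⊆ {q : ℝ × ℝ | t < q.2} ∩ ({q | u * q.2 < q.1} ∩ {q | q.1 < v * q.2}) from
    fun b hb => h hb
  refine hc.subset_left_of_subset_union o1 o2 ?_ ?_ ⟨e, he, h1, h2, h3⟩
  · rw [Set.disjoint_left]
    rintro q ⟨h1, h2, h3⟩ (h | h | h) <;> simp only [mem_ofPred_eq] at h1 h2 h3 h <;> linarith
  · intro q hq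
    by_cases hq2 : q.2 < t
    · exact Or.inr (Or.inl hq2)
    have hq0 : 0 < q.2 := by linarith
    have hm := fan_div_mem (hA hq) hq0
    have n1 : q.1 ≠ u * q.2 := by
      intro h
      rw [h, mul_div_cancel_right₀ _ hq0.ne'] at hm
      exact hu hm
    have n2 : q.1 ≠ v * q.2 := by
      intro h
      rw [h, mul_div_cancel_right₀ _ hq0.ne'] at hm
      exact hv hm
    rcases n1.lt_or_gt with l1 | l1
    · exact Or.inr (Or.inr (Or.inl l1))
    rcases n2.lt_or_gt with l2 | l2
    · refine Or.inl ⟨?_, l1, l2⟩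
      refine lt_of_le_of_ne (not_lt.1 hq2) fun h => ?_
      exact hgap q hq h.symm ((lt_div_iff₀ hq0).2 l1) ((div_lt_iff₀ hq0).2 l2)
    · exact Or.inr (Or.inr (Or.inr l2))

/-- A closed connected subset of the Cantor fan that contains a point of a leg and leaves the
part of the leg above height `t` passes through the point of the leg at height `t`. -/
lemma leg_mem {A : Set (ℝ × ℝ)} (hA : A ⊆ CantorFan) (hc : IsPreconnected A) (hcl : IsClosed A)
    {c a t : ℝ} (hca : (a * c, a) ∈ A) (ht : 0 < t) (hta : t < a) {b : ℝ × ℝ} (hb : b ∈ A)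
    (hb' : t ≤ b.2 → b.1 / b.2 ≠ c) : (t * c, t) ∈ A := by
  by_contra hn
  have h1 : ∀ᶠ s in 𝓝 c, (t * s, t) ∉ A :=
    (hcl.isOpen_compl.preimage (f := fun s : ℝ => (t * s, t)) (by fun_prop)).mem_nhds hn
  have h2 : ∀ᶠ s in 𝓝 c, t ≤ b.2 → b.1 / b.2 ≠ s := by
    by_cases h : t ≤ b.2
    · filter_upwards [isOpen_ne.mem_nhds (hb' h).symm] with s hs _ using hs.symm
    · exact Eventually.of_forall fun s hs => absurd hs h
  obtain ⟨l, r, hlr, hs⟩ := mem_nhds_iff_exists_Ioo_subset.1 (h1.and h2)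
  obtain ⟨u, hu, huC⟩ := exists_notMem_cantorSet hlr.1
  obtain ⟨v, hv, hvC⟩ := exists_notMem_cantorSet hlr.2
  have ha : 0 < a := ht.trans hta
  have := fan_separation hA hc huC hvC ht (fun q hq hqt hq1 hq2 => by
    refine (hs ⟨hu.1.trans hq1, hq2.trans hv.2⟩).1 ?_
    have e := fan_eq (q := q) (hqt ▸ ht)
    rw [hqt] at e ⊢
    rwa [← e]) hca hta (by nlinarith [hu.2]) (by nlinarith [hv.1]) b hb
  have hb0 : 0 < b.2 := ht.trans this.1
  exact (hs ⟨hu.1.trans ((lt_div_iff₀ hb0).2 this.2.1),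
    ((div_lt_iff₀ hb0).2 this.2.2).trans hv.2⟩).2 this.1.le rfl

/-- The height of the leg of slope `c` in a fan `X` (it is `0` if there is no such leg). -/
def legHeight (X : Set (ℝ × ℝ)) (c : ℝ) : ℝ := sSup {t | (t * c, t) ∈ X}

variable {X : Set (ℝ × ℝ)}

lemma IsSmoothFan.mem_iff (hX : IsSmoothFan X) (c t : ℝ) :
    (t * c, t) ∈ X ↔ 0 ≤ t ∧ t ≤ legHeight X c := by
  have hcl : IsClosed {t : ℝ | (t * c, t) ∈ X} :=
    hX.isCompact.isClosed.preimage (f := fun t : ℝ => (t * c, t)) (by fun_prop)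
  have h0 : (0 : ℝ) ∈ {t : ℝ | (t * c, t) ∈ X} := by
    have := hX.vertex_mem
    simpa [fanVertex] using this
  have hb : BddAbove {t : ℝ | (t * c, t) ∈ X} :=
    ⟨1, fun t ht => (fan_bounds (hX.subset_fan ht)).2.2.2⟩
  have hmem := hcl.csSup_mem ⟨0, h0⟩ hb
  constructor
  · intro h
    exact ⟨(fan_bounds (hX.subset_fan h)).2.2.1, le_csSup hb h⟩
  · rintro ⟨h1, h2⟩
    rcases h1.eq_or_lt with rfl | h1
    · exact h0
    rcases h2.eq_or_lt with rfl | h2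
    · exact hmem
    refine leg_mem hX.subset_fan hX.isConnected.isPreconnected hX.isCompact.isClosed hmem h1 h2
      hX.vertex_mem fun h => ?_
    simp only [fanVertex] at h
    linarith

lemma IsSmoothFan.legHeight_nonneg (hX : IsSmoothFan X) (c : ℝ) : 0 ≤ legHeight X c := by
  have h : ((0 : ℝ) * c, (0 : ℝ)) ∈ X := by
    have := hX.vertex_mem
    simpa [fanVertex] using this
  exact ((hX.mem_iff c 0).1 h).2

lemma IsSmoothFan.tip_mem (hX : IsSmoothFan X) (c : ℝ) :
    (legHeight X c * c, legHeight X c) ∈ X :=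
  (hX.mem_iff c _).2 ⟨hX.legHeight_nonneg c, le_rfl⟩

lemma IsSmoothFan.mem_cantorSet (hX : IsSmoothFan X) {c : ℝ} (hc : 0 < legHeight X c) :
    c ∈ cantorSet := by
  have := fan_div_mem (hX.subset_fan (hX.tip_mem c)) hc
  rwa [mul_div_cancel_left₀ _ hc.ne'] at this

lemma IsSmoothFan.le_legHeight (hX : IsSmoothFan X) {q : ℝ × ℝ} (hq : q ∈ X) (h0 : 0 < q.2) :
    q.2 ≤ legHeight X (q.1 / q.2) := by
  refine ((hX.mem_iff _ _).1 ?_).2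
  rwa [← fan_eq h0]

lemma IsSmoothFan.legHeight_usc (hX : IsSmoothFan X) : UpperSemicontinuous (legHeight X) := by
  rw [upperSemicontinuous_iff_isClosed_preimage]
  intro r
  rcases le_or_gt r 0 with hr | hr
  · convert isClosed_univ
    exact eq_univ_of_forall fun c => hr.trans (hX.legHeight_nonneg c)
  · have : legHeight X ⁻¹' Ici r = (fun c : ℝ => (r * c, r)) ⁻¹' X := by
      ext c
      simp only [mem_preimage, mem_Ici]
      rw [hX.mem_iff]
      exact ⟨fun h => ⟨hr.le, h⟩, fun h => h.2⟩
    rw [this]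
    exact hX.isCompact.isClosed.preimage (by fun_prop)

/-! ### Endpoints of smooth fans -/

/-- The subsegment of the leg of slope `c` between heights `s` and `t`. -/
def legArc (c s t : ℝ) : Set (ℝ × ℝ) :=
  range fun r : Icc (0 : ℝ) 1 => ((s + r * (t - s)) * c, s + r * (t - s))

lemma isArc_legArc (c : ℝ) {s t : ℝ} (h : s ≠ t) :
    IsArc (legArc c s t) (s * c, s) (t * c, t) := by
  have hc : Continuous fun r : Icc (0 : ℝ) 1 => ((s + r * (t - s)) * c, s + r * (t - s)) := by
    fun_prop
  have hi : Function.Injective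
      fun r : Icc (0 : ℝ) 1 => ((s + r * (t - s)) * c, s + r * (t - s)) := by
    intro r r' hr
    have h2 := (Prod.ext_iff.1 hr).2
    simp only [add_right_inj] at h2
    exact Subtype.ext (mul_right_cancel₀ (sub_ne_zero.2 h.symm) h2)
  refine ⟨(hc.isClosedEmbedding hi).isEmbedding.toHomeomorph, ?_, ?_⟩
  · change ((s + (0 : ℝ) * (t - s)) * c, s + (0 : ℝ) * (t - s)) = (s * c, s)
    simp
  · change ((s + (1 : ℝ) * (t - s)) * c, s + (1 : ℝ) * (t - s)) = (t * c, t)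
    simp

lemma legArc_subset {c s t : ℝ} {q : ℝ × ℝ} (hq : q ∈ legArc c s t) :
    q = (q.2 * c, q.2) ∧ min s t ≤ q.2 ∧ q.2 ≤ max s t := by
  obtain ⟨r, rfl⟩ := hq
  have h0 := r.2.1
  have h1 := r.2.2
  refine ⟨rfl, ?_, ?_⟩
  · rcases le_total s t with h | h
    · rw [min_eq_left h]
      nlinarith
    · rw [min_eq_right h]
      nlinarith
  · rcases le_total s t with h | h
    · rw [max_eq_right h]
      nlinarith
    · rw [max_eq_left h]
      nlinarith

lemma IsArc.props {A : Set (ℝ × ℝ)} {a b : ℝ × ℝ} (h : IsArc A a b) :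
    IsPreconnected A ∧ IsClosed A ∧ a ∈ A ∧ b ∈ A ∧ a ≠ b := by
  obtain ⟨f, rfl, rfl⟩ := h
  have : CompactSpace A := f.compactSpace
  have hp : PreconnectedSpace (Icc (0 : ℝ) 1) :=
    isPreconnected_iff_preconnectedSpace.1 isPreconnected_Icc
  have hA : PreconnectedSpace A :=
    ⟨f.range_eq_univ ▸ isPreconnected_range f.continuous⟩
  refine ⟨isPreconnected_iff_preconnectedSpace.2 hA, (isCompact_iff_compactSpace.2 this).isClosed,
    Subtype.coe_prop _, Subtype.coe_prop _, fun h => ?_⟩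
  have := f.injective (Subtype.ext h)
  simp at this

/-- The endpoints of a smooth fan are exactly the tips of its nondegenerate legs. -/
lemma IsSmoothFan.mem_endpoints_iff (hX : IsSmoothFan X) (q : ℝ × ℝ) :
    q ∈ Endpoints X ↔ 0 < q.2 ∧ q.2 = legHeight X (q.1 / q.2) := by
  constructor
  · rintro ⟨hq, -, h2⟩
    have hb := fan_bounds (hX.subset_fan hq)
    have h0 : 0 < q.2 := by
      refine lt_of_le_of_ne hb.2.2.1 fun h => h2 ?_
      rw [fan_eq_vertex (hX.subset_fan hq) h.symm]
      exact hX.vertex_order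
    refine ⟨h0, (hX.le_legHeight hq h0).antisymm (not_lt.1 fun hlt => h2 ?_)⟩
    -- below the tip, the leg leaves `q` both upwards and downwards
    set c := q.1 / q.2 with hc
    have e := fan_eq h0
    rw [← hc] at e
    have i1 : ∀ x ∈ legArc c q.2 0, x ∈ X := by
      intro x hx
      obtain ⟨h3, h4, h5⟩ := legArc_subset hx
      rw [min_eq_right h0.le] at h4
      rw [max_eq_left h0.le] at h5
      rw [h3]
      exact (hX.mem_iff _ _).2 ⟨h4, h5.trans hlt.le⟩
    have i2 : ∀ x ∈ legArc c q.2 (legHeight X c), x ∈ X := by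
      intro x hx
      obtain ⟨h3, h4, h5⟩ := legArc_subset hx
      rw [min_eq_left hlt.le] at h4
      rw [max_eq_right hlt.le] at h5
      rw [h3]
      exact (hX.mem_iff _ _).2 ⟨h0.le.trans h4, h5⟩
    have a1 := isArc_legArc c h0.ne'
    have a2 := isArc_legArc c hlt.ne
    rw [← e] at a1 a2
    have i3 : legArc c q.2 0 ∩ legArc c q.2 (legHeight X c) = {q} := by
      ext x
      constructor
      · rintro ⟨hx, hx'⟩
        obtain ⟨h3, h4, h5⟩ := legArc_subset hx
        obtain ⟨-, h6, h7⟩ := legArc_subset hx'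
        rw [max_eq_left h0.le] at h5
        rw [min_eq_left hlt.le] at h6
        rw [mem_singleton_iff, h3, h5.antisymm h6, ← e]
      · rintro rfl
        exact ⟨a1.props.2.2.1, a2.props.2.2.1⟩
    refine ⟨![legArc c q.2 0, legArc c q.2 (legHeight X c)], ?_, ?_, ?_⟩
    · intro i
      fin_cases i
      · exact i1
      · exact i2
    · intro i
      fin_cases i
      · exact ⟨_, a1⟩
      · exact ⟨_, a2⟩
    · intro i j hij
      fin_cases i <;> fin_cases j
      · exact absurd rfl hij
      · exact i3
      · exact (inter_comm _ _).trans i3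
      · exact absurd rfl hij
  · rintro ⟨h0, h1⟩
    set c := q.1 / q.2 with hc
    have e := fan_eq h0
    rw [← hc] at e
    have hq : q ∈ X := by
      rw [e]
      exact (hX.mem_iff _ _).2 ⟨h0.le, h1.le⟩
    refine ⟨hq, ⟨fun _ => legArc c q.2 0, fun _ x hx => ?_, fun _ => ⟨(0 * c, 0), ?_⟩,
      fun i j hij => absurd (Subsingleton.elim i j) hij⟩, ?_⟩
    · obtain ⟨h3, h4, h5⟩ := legArc_subset hx
      rw [min_eq_right h0.le] at h4
      rw [max_eq_left h0.le] at h5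
      rw [h3]
      exact (hX.mem_iff _ _).2 ⟨h4, h5.trans h1.le⟩
    · have := isArc_legArc c h0.ne'
      rwa [← e] at this
    -- every arc starting at the tip contains all points of the leg close to the tip
    · rintro ⟨A, hAX, hA, hAA⟩
      have key : ∀ i, ∃ t₀ < q.2, ∀ t, t₀ < t → 0 < t → t < q.2 → (t * c, t) ∈ A i := by
        intro i
        obtain ⟨b, hb⟩ := hA i
        obtain ⟨p1, p2, p3, p4, p5⟩ := hb.props
        by_cases hbc : b.1 / b.2 = c ∧ 0 < b.2
        · have hle : b.2 ≤ q.2 := by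
            have := hX.le_legHeight (hAX i p4) hbc.2
            rwa [hbc.1, ← h1] at this
          have hlt : b.2 < q.2 := by
            refine lt_of_le_of_ne hle fun h => p5 ?_
            rw [e, fan_eq hbc.2, hbc.1, h]
          refine ⟨b.2, hlt, fun t ht1 ht2 ht3 => ?_⟩
          rw [e] at p3
          exact leg_mem ((hAX i).trans hX.subset_fan) p1 p2 p3 ht2 ht3 p4
            fun h => absurd h (not_le.2 ht1)
        · refine ⟨0, h0, fun t _ ht2 ht3 => ?_⟩
          rw [e] at p3
          exact leg_mem ((hAX i).trans hX.subset_fan) p1 p2 p3 ht2 ht3 p4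
            fun h h' => hbc ⟨h', ht2.trans_le h⟩
      obtain ⟨t₀, l0, k0⟩ := key 0
      obtain ⟨t₁, l1, k1⟩ := key 1
      obtain ⟨t, ht, htq⟩ := exists_between (max_lt (max_lt l0 l1) h0)
      simp only [max_lt_iff] at ht
      have hm : (t * c, t) ∈ A 0 ∩ A 1 := ⟨k0 t ht.1.1 ht.2 htq, k1 t ht.1.2 ht.2 htq⟩
      rw [hAA 0 1 (by simp)] at hm
      have h2 : t = q.2 := (Prod.ext_iff.1 hm).2
      exact htq.ne h2

/-! ### The height function of a smooth fan -/

/-- The closed set of slopes that are limits of slopes of nondegenerate legs. -/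
def fanBase (X : Set (ℝ × ℝ)) : Set ℝ := closure {c | 0 < legHeight X c}

/-- The height function of a fan on the closure of the set of its slopes. -/
def fanφ (X : Set (ℝ × ℝ)) (c : fanBase X) : ℝ := legHeight X c

lemma IsSmoothFan.fanBase_subset (hX : IsSmoothFan X) : fanBase X ⊆ cantorSet :=
  closure_minimal (fun _ hc => hX.mem_cantorSet hc) isClosed_cantorSet

lemma IsSmoothFan.compactSpace_fanBase (hX : IsSmoothFan X) : CompactSpace (fanBase X) :=
  isCompact_iff_compactSpace.1
    (isCompact_cantorSet.of_isClosed_subset isClosed_closure hX.fanBase_subset)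

lemma IsSmoothFan.totallyDisconnectedSpace_fanBase (hX : IsSmoothFan X) :
    TotallyDisconnectedSpace (fanBase X) :=
  totallyDisconnectedSpace_subtype_iff.2
    fun s hs => isTotallyDisconnected_cantorSet' s (hs.trans hX.fanBase_subset)

lemma IsSmoothFan.slope_mem (hX : IsSmoothFan X) {q : ℝ × ℝ} (hq : q ∈ X) (h0 : 0 < q.2) :
    q.1 / q.2 ∈ fanBase X :=
  subset_closure (h0.trans_le (hX.le_legHeight hq h0))

lemma IsSmoothFan.nonempty_fanBase (hX : IsSmoothFan X) : Nonempty (fanBase X) := by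
  obtain ⟨x, hx, y, hy, hxy⟩ := hX.nondegenerate
  have hb := (fan_bounds (hX.subset_fan hx)).2.2.1
  have hb' := (fan_bounds (hX.subset_fan hy)).2.2.1
  rcases hb.eq_or_lt with h | h
  · rcases hb'.eq_or_lt with h' | h'
    · exact absurd ((fan_eq_vertex (hX.subset_fan hx) h.symm).trans
        (fan_eq_vertex (hX.subset_fan hy) h'.symm).symm) hxy
    · exact ⟨⟨_, hX.slope_mem hy h'⟩⟩
  · exact ⟨⟨_, hX.slope_mem hx h⟩⟩

lemma IsSmoothFan.fanφ_usc (hX : IsSmoothFan X) : UpperSemicontinuous (fanφ X) :=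
  hX.legHeight_usc.comp continuous_subtype_val

/-- Every point of a smooth fan lies on a leg with slope in `fanBase X`. -/
lemma IsSmoothFan.exists_slope (hX : IsSmoothFan X) {q : ℝ × ℝ} (hq : q ∈ X) :
    ∃ c : fanBase X, q = (q.2 * c, q.2) := by
  rcases (fan_bounds (hX.subset_fan hq)).2.2.1.eq_or_lt with h | h
  · obtain ⟨c⟩ := hX.nonempty_fanBase
    refine ⟨c, ?_⟩
    rw [fan_eq_vertex (hX.subset_fan hq) h.symm]
    simp [fanVertex]
  · exact ⟨⟨_, hX.slope_mem hq h⟩, fan_eq h⟩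

lemma exists_pos_fanφ {U : Set (fanBase X)} (hU : IsOpen U)
    {x : fanBase X} (hx : x ∈ U) : ∃ y ∈ U, 0 < fanφ X y := by
  obtain ⟨V, hV, rfl⟩ := isOpen_induced_iff.1 hU
  obtain ⟨y, hy, hy'⟩ := mem_closure_iff.1 x.2 V hV hx
  exact ⟨⟨y, subset_closure hy'⟩, hy, hy'⟩

/-- The endpoint set of a smooth fan is homeomorphic to the positive graph of its height
function. -/
def IsSmoothFan.endpointsHomeo (hX : IsSmoothFan X) : Endpoints X ≃ₜ PosGraph (fanφ X) where
  toFun q := ⟨(⟨(q : ℝ × ℝ).1 / (q : ℝ × ℝ).2,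
      hX.slope_mem q.2.1 ((hX.mem_endpoints_iff q).1 q.2).1⟩, (q : ℝ × ℝ).2),
    (hX.mem_endpoints_iff q).1 q.2⟩
  invFun z := ⟨((z : fanBase X × ℝ).2 * (z : fanBase X × ℝ).1, (z : fanBase X × ℝ).2), by
    rw [hX.mem_endpoints_iff]
    refine ⟨z.2.1, ?_⟩
    rw [mul_div_cancel_left₀ _ z.2.1.ne']
    exact z.2.2⟩
  left_inv q := Subtype.ext (fan_eq ((hX.mem_endpoints_iff q).1 q.2).1).symm
  right_inv z := Subtype.ext (Prod.ext (Subtype.ext (mul_div_cancel_left₀ _ z.2.1.ne')) rfl)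
  continuous_toFun := by
    have h : Continuous fun q : Endpoints X => (q : ℝ × ℝ).1 / (q : ℝ × ℝ).2 :=
      Continuous.div (by fun_prop) (by fun_prop) fun q => ((hX.mem_endpoints_iff q).1 q.2).1.ne'
    exact ((h.subtype_mk _).prodMk (by fun_prop)).subtype_mk _
  continuous_invFun := by fun_prop

/-- If the height function is not a Lelek function, then some heights are skipped over a whole
open set of slopes. -/
lemma IsSmoothFan.exists_gap (hX : IsSmoothFan X) (h : ¬ IsLelek (fanφ X)) :
    ∃ U : Set (fanBase X), IsOpen U ∧ ∃ x ∈ U, ∃ a b : ℝ, 0 ≤ a ∧ a < b ∧ a < fanφ X x ∧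
      ∀ y ∈ U, a < fanφ X y → b ≤ fanφ X y := by
  by_contra! hn
  refine h ⟨hX.fanφ_usc, fun c => hX.legHeight_nonneg c, fun U hU x hx a b ha hab hax => ?_⟩
  obtain ⟨x', hx', haxU⟩ : ∃ x' ∈ U, a < fanφ X x' := by
    rcases hax with hax | rfl
    · exact ⟨x, hx, hax⟩
    · exact exists_pos_fanφ hU hx
  exact hn U hU x' hx' a b ha hab haxU

/-- The endpoints of a smooth fan are dense if and only if its height function is Lelek. -/
lemma IsSmoothFan.dense_iff (hX : IsSmoothFan X) :
    X ⊆ closure (Endpoints X) ↔ IsLelek (fanφ X) := by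
  constructor
  · intro hd
    by_contra hn
    obtain ⟨U, hU, x, hx, a, b, ha, hab, hax, hgap⟩ := hX.exists_gap hn
    obtain ⟨V, hV, rfl⟩ := isOpen_induced_iff.1 hU
    have hbx := hgap x hx hax
    obtain ⟨t, hat, htb⟩ := exists_between hab
    have ht : 0 < t := ha.trans_lt hat
    have hmem : (t * x, t) ∈ X := (hX.mem_iff _ _).2 ⟨ht.le, htb.le.trans hbx⟩
    have hc : ContinuousAt (fun q : ℝ × ℝ => q.1 / q.2) (t * x, t) :=
      continuousAt_fst.div continuousAt_snd ht.ne'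
    have hV' : ∀ᶠ q : ℝ × ℝ in 𝓝 (t * (x : ℝ), t), q.1 / q.2 ∈ V := by
      refine hc.eventually_mem (hV.mem_nhds ?_)
      simpa [mul_div_cancel_left₀ _ ht.ne'] using hx
    have hab' : ∀ᶠ q : ℝ × ℝ in 𝓝 (t * (x : ℝ), t), a < q.2 ∧ q.2 < b :=
      (continuousAt_snd : ContinuousAt Prod.snd (t * (x : ℝ), t)).eventually_mem (Ioo_mem_nhds hat htb)
    obtain ⟨q, hq, hqV, hqa, hqb⟩ :=
      ((mem_closure_iff_frequently.1 (hd hmem)).and_eventually (hV'.and hab')).exists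
    obtain ⟨h0, h1⟩ := (hX.mem_endpoints_iff q).1 hq
    have h2 : fanφ X ⟨_, hX.slope_mem hq.1 h0⟩ = q.2 := h1.symm
    have := hgap ⟨_, hX.slope_mem hq.1 h0⟩ hqV (by rwa [h2])
    linarith
  · intro hL q hq
    obtain ⟨c, hc⟩ := hX.exists_slope hq
    have hle : 0 ≤ q.2 ∧ q.2 ≤ fanφ X c := (hX.mem_iff _ _).1 (hc ▸ hq)
    rw [mem_closure_iff_nhds]
    intro W hW
    have hcont : ContinuousAt (fun z : fanBase X × ℝ => (z.2 * (z.1 : ℝ), z.2)) (c, q.2) := by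
      fun_prop
    have hW' := hcont (show W ∈ 𝓝 (q.2 * (c : ℝ), q.2) by rwa [← hc])
    rw [mem_map, nhds_prod_eq, mem_prod_iff] at hW'
    obtain ⟨U, hU, T, hT, hUT⟩ := hW'
    obtain ⟨U', hU'U, hU', hcU'⟩ := mem_nhds_iff.1 hU
    obtain ⟨l, r, hlr, hT'⟩ := mem_nhds_iff_exists_Ioo_subset.1 hT
    obtain ⟨y, hy, hy1, hy2⟩ := hL.dense U' hU' c hcU' (max 0 l) r (le_max_left _ _)
      (max_lt (hle.1.trans_lt hlr.2) (hlr.1.trans hlr.2)) (by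
        rcases le_total l 0 with h | h
        · exact Or.inr (max_eq_left h)
        · exact Or.inl ((max_eq_right h).trans_lt (hlr.1.trans_le hle.2)))
    have hy0 : 0 < fanφ X y := (le_max_left _ _).trans_lt hy1
    refine ⟨(fanφ X y * (y : ℝ), fanφ X y), ?_, ?_⟩
    · exact hUT (mk_mem_prod (hU'U hy) (hT' ⟨(le_max_right _ _).trans_lt hy1, hy2⟩))
    · rw [hX.mem_endpoints_iff]
      refine ⟨hy0, ?_⟩
      simp only [mul_div_cancel_left₀ _ hy0.ne']
      rfl

/-! ### The three characterizations -/

lemma IsSmoothFan.subset_of_isLelek (hX : IsSmoothFan X) (hL : IsLelek (fanφ X))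
    {u v : Set (ℝ × ℝ)} (hu : IsOpen u) (hv : IsOpen v)
    (huv : Endpoints X ∪ {fanVertex} ⊆ u ∪ v)
    (hd : (Endpoints X ∪ {fanVertex}) ∩ (u ∩ v) = ∅) (hp : fanVertex ∈ v) :
    Endpoints X ∪ {fanVertex} ⊆ v := by
  have := hX.compactSpace_fanBase
  intro e he
  by_contra hev
  have heu : e ∈ u := (huv he).resolve_right hev
  have heE : e ∈ Endpoints X := by
    refine he.resolve_right fun h => hev ?_
    rw [mem_singleton_iff.1 h]
    exact hp
  let g : PosGraph (fanφ X) → ℝ × ℝ := fun z => hX.endpointsHomeo.symm z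
  have hg : Continuous g := continuous_subtype_val.comp hX.endpointsHomeo.symm.continuous
  have hgE : ∀ z, g z ∈ Endpoints X := fun z => Subtype.coe_prop _
  have hcompl : (g ⁻¹' u)ᶜ = g ⁻¹' v := by
    ext z
    constructor
    · intro h
      exact (huv (Or.inl (hgE z))).resolve_left h
    · intro h h'
      exact eq_empty_iff_forall_notMem.1 hd (g z) ⟨Or.inl (hgE z), h', h⟩
  have hcl : IsClopen (g ⁻¹' u) :=
    ⟨isOpen_compl_iff.1 (hcompl ▸ hv.preimage hg), hu.preimage hg⟩
  have hne : (g ⁻¹' u).Nonempty := by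
    refine ⟨hX.endpointsHomeo ⟨e, heE⟩, ?_⟩
    simp only [mem_preimage, g, Homeomorph.symm_apply_apply]
    exact heu
  obtain ⟨δ, hδ, hball⟩ := Metric.isOpen_iff.1 hv _ hp
  obtain ⟨z, hz, hzδ⟩ := exists_low_of_isClopen hL hcl hne hδ
  have hzv : g z ∈ v := by
    have hb := fan_bounds (hX.subset_fan (hgE z).1)
    have h2 : (g z).2 < δ := hzδ
    refine hball ?_
    rw [Metric.mem_ball, Prod.dist_eq, max_lt_iff]
    simp only [fanVertex, Real.dist_eq, sub_zero, abs_of_nonneg hb.1, abs_of_nonneg hb.2.2.1]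
    exact ⟨hb.2.1.trans_lt h2, h2⟩
  exact eq_empty_iff_forall_notMem.1 hd (g z) ⟨Or.inl (hgE z), hz, hzv⟩

lemma IsSmoothFan.connected_iff (hX : IsSmoothFan X) :
    IsLelek (fanφ X) ↔ IsConnected (Endpoints X ∪ {fanVertex}) := by
  constructor
  · intro hL
    refine ⟨⟨fanVertex, Or.inr rfl⟩, ?_⟩
    rw [isPreconnected_iff_subset_of_disjoint]
    intro u v hu hv huv hd
    rcases huv (Or.inr rfl) with hp | hp
    · left
      exact hX.subset_of_isLelek hL hv hu (union_comm u v ▸ huv) (inter_comm u v ▸ hd) hp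
    · right
      exact hX.subset_of_isLelek hL hu hv huv hd hp
  · intro hconn
    by_contra hn
    obtain ⟨U, hU, x, hx, a, b, ha, hab, hax, hgap⟩ := hX.exists_gap hn
    obtain ⟨V, hV, rfl⟩ := isOpen_induced_iff.1 hU
    have hbx := hgap x hx hax
    obtain ⟨t, hat, htb⟩ := exists_between hab
    have ht : 0 < t := ha.trans_lt hat
    obtain ⟨l, r, hlr, hs⟩ := mem_nhds_iff_exists_Ioo_subset.1 (hV.mem_nhds hx)
    obtain ⟨u, hu, huC⟩ := exists_notMem_cantorSet hlr.1
    obtain ⟨v, hv, hvC⟩ := exists_notMem_cantorSet hlr.2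
    have hφ : 0 < fanφ X x := ha.trans_lt hax
    have hsub : Endpoints X ∪ {fanVertex} ⊆ CantorFan := by
      rintro q (hq | rfl)
      · exact hX.subset_fan hq.1
      · exact hX.subset_fan hX.vertex_mem
    have hmem : (fanφ X x * (x : ℝ), fanφ X x) ∈ Endpoints X :=
      Subtype.coe_prop (hX.endpointsHomeo.symm ⟨(x, fanφ X x), hφ, rfl⟩)
    have := fan_separation hsub hconn.isPreconnected huC hvC ht (fun q hq hqt hq1 hq2 => by
      rcases hq with hq | rfl
      · obtain ⟨h0, h1⟩ := (hX.mem_endpoints_iff q).1 hq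
        have h2 : fanφ X ⟨_, hX.slope_mem hq.1 h0⟩ = q.2 := h1.symm
        have := hgap ⟨_, hX.slope_mem hq.1 h0⟩ (hs ⟨hu.1.trans hq1, hq2.trans hv.2⟩)
          (by rw [h2, hqt]; exact hat)
        linarith
      · simp only [fanVertex] at hqt
        linarith) (Or.inl hmem) (htb.trans_le hbx)
      (by simp only; nlinarith [hu.2]) (by simp only; nlinarith [hv.1]) fanVertex (Or.inr rfl)
    have := this.1
    simp only [fanVertex] at this
    linarith

lemma IsSmoothFan.erdos_iff (hX : IsSmoothFan X) :
    IsLelek (fanφ X) ↔ Nonempty (Endpoints X ≃ₜ ErdosSpace) := by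
  have := hX.compactSpace_fanBase
  have := hX.totallyDisconnectedSpace_fanBase
  have := hX.nonempty_fanBase
  constructor
  · intro hL
    have : Nonempty ErdosProd := ⟨fun _ => ⟨0, Or.inl rfl⟩⟩
    obtain ⟨h, α, hα, hpos, he⟩ := exists_homeo_of_isLelek hL isLelek_erdosφ
    exact ⟨(hX.endpointsHomeo.trans (posGraphHomeo h hα hpos he)).trans erdosHomeo.symm⟩
  · rintro ⟨h⟩
    by_contra hn
    obtain ⟨U, hU, x, hx, a, b, ha, hab, hax, hgap⟩ := hX.exists_gap hn
    obtain ⟨z, hz⟩ := exists_zeroDimPointAt hX.fanφ_usc hU hx ha hab hax hgap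
    exact not_zeroDimPointAt isLelek_erdosφ _
      (hz.map ((hX.endpointsHomeo.symm.trans h).trans erdosHomeo))

/-- A homeomorphism between the sets of slopes which matches the heights up to a continuous
positive factor extends linearly on legs to a homeomorphism of the fans. -/
lemma IsSmoothFan.nonempty_homeo {Y : Set (ℝ × ℝ)} (hX : IsSmoothFan X) (hY : IsSmoothFan Y)
    (h : fanBase X ≃ₜ fanBase Y) {α : fanBase X → ℝ} (hα : Continuous α) (hpos : ∀ c, 0 < α c)
    (he : ∀ c, fanφ Y (h c) = α c * fanφ X c) : Nonempty (X ≃ₜ Y) := by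
  have := hX.compactSpace_fanBase
  have : CompactSpace X := isCompact_iff_compactSpace.1 hX.isCompact
  have : CompactSpace Y := isCompact_iff_compactSpace.1 hY.isCompact
  let P : Set (fanBase X × ℝ) := {z | (z.2 * (z.1 : ℝ), z.2) ∈ X}
  let F : fanBase X × ℝ → (ℝ × ℝ) × (ℝ × ℝ) := fun z =>
    ((z.2 * (z.1 : ℝ), z.2), (z.2 * α z.1 * (h z.1 : ℝ), z.2 * α z.1))
  have hP : IsCompact P := by
    have hcl : IsClosed P := hX.isCompact.isClosed.preimage
      (f := fun z : fanBase X × ℝ => (z.2 * (z.1 : ℝ), z.2)) (by fun_prop)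
    refine (isCompact_univ.prod (isCompact_Icc (a := (0 : ℝ)) (b := 1))).of_isClosed_subset hcl
      fun z hz => ⟨mem_univ _, (fan_bounds (hX.subset_fan hz)).2.2⟩
  have hF : Continuous F := by fun_prop
  let R : Set (X × Y) := {w | ((w.1 : ℝ × ℝ), (w.2 : ℝ × ℝ)) ∈ F '' P}
  have hR : IsClosed R := (hP.image hF).isClosed.preimage (by fun_prop)
  have hPY : ∀ z, z ∈ P ↔ (F z).2 ∈ Y := by
    intro z
    change (z.2 * (z.1 : ℝ), z.2) ∈ X ↔ (z.2 * α z.1 * (h z.1 : ℝ), z.2 * α z.1) ∈ Y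
    rw [hX.mem_iff, hY.mem_iff]
    have e1 : legHeight Y (h z.1) = α z.1 * legHeight X z.1 := he z.1
    rw [e1, mul_comm, mul_le_mul_iff_right₀ (hpos _), mul_nonneg_iff_of_pos_left (hpos _)]
  -- two points of `P` agree after `F` in one coordinate iff in the other
  have hF1 : ∀ z z', (F z).1 = (F z').1 → (F z).2 = (F z').2 := by
    rintro ⟨c, t⟩ ⟨c', t'⟩ hzz
    obtain ⟨h1, h2⟩ := Prod.ext_iff.1 hzz
    simp only [F] at h1 h2 ⊢
    subst h2
    rcases eq_or_ne t 0 with rfl | ht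
    · simp
    · have : c = c' := Subtype.ext (mul_left_cancel₀ ht h1)
      rw [this]
  have hF2 : ∀ z z', (F z).2 = (F z').2 → (F z).1 = (F z').1 := by
    rintro ⟨c, t⟩ ⟨c', t'⟩ hzz
    obtain ⟨h1, h2⟩ := Prod.ext_iff.1 hzz
    simp only [F] at h1 h2 ⊢
    rw [← h2] at h1
    rcases eq_or_ne (t * α c) 0 with h0 | h0
    · have ht : t = 0 := (mul_eq_zero.1 h0).resolve_right (hpos c).ne'
      rw [h0] at h2
      have ht' : t' = 0 := (mul_eq_zero.1 h2.symm).resolve_right (hpos c').ne'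
      simp [ht, ht']
    · have : c = c' := h.injective (Subtype.ext (mul_left_cancel₀ h0 h1))
      subst this
      rw [mul_right_cancel₀ (hpos c).ne' h2]
  obtain ⟨f, -⟩ := exists_homeo_of_rel hR
    (fun x => by
      obtain ⟨c, hc⟩ := hX.exists_slope x.2
      have hz : (c, (x : ℝ × ℝ).2) ∈ P := by
        change ((x : ℝ × ℝ).2 * (c : ℝ), (x : ℝ × ℝ).2) ∈ X
        rw [← hc]
        exact x.2
      refine ⟨⟨_, (hPY _).1 hz⟩, ⟨_, hz, Prod.ext hc.symm rfl⟩, ?_⟩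
      rintro y ⟨z', hz', hzz⟩
      obtain ⟨h1, h2⟩ := Prod.ext_iff.1 hzz
      exact Subtype.ext (h2.symm.trans (hF1 _ _ (h1.trans hc))))
    (fun y => by
      obtain ⟨d, hd⟩ := hY.exists_slope y.2
      have hFz : (F (h.symm d, (y : ℝ × ℝ).2 / α (h.symm d))).2 = y := by
        simp only [F, h.apply_symm_apply, div_mul_cancel₀ _ (hpos _).ne']
        exact hd.symm
      have hz : (h.symm d, (y : ℝ × ℝ).2 / α (h.symm d)) ∈ P :=
        (hPY _).2 (by rw [hFz]; exact y.2)
      refine ⟨⟨_, hz⟩, ⟨_, hz, Prod.ext rfl hFz⟩, ?_⟩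
      rintro x ⟨z', hz', hzz⟩
      obtain ⟨h1, h2⟩ := Prod.ext_iff.1 hzz
      exact Subtype.ext (h1.symm.trans (hF2 _ _ (h2.trans hFz.symm))))
  exact ⟨f⟩

end Fans

/-- For a smooth fan `X` with vertex `p` the following are equivalent:
`E(X)` is dense in `X`; `E(X) ∪ {p}` is connected; `E(X)` is homeomorphic to complete
Erdős space.  Consequently any two smooth fans whose endpoint sets are homeomorphic to
complete Erdős space are homeomorphic. -/
theorem lelek_characterization :
    (∀ X : Set (ℝ × ℝ), IsSmoothFan X →
      ((X ⊆ closure (Endpoints X)) ↔ IsConnected (Endpoints X ∪ {fanVertex})) ∧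
      ((X ⊆ closure (Endpoints X)) ↔ Nonempty (↥(Endpoints X) ≃ₜ ↥ErdosSpace))) ∧
    (∀ X Y : Set (ℝ × ℝ), IsSmoothFan X → IsSmoothFan Y →
      Nonempty (↥(Endpoints X) ≃ₜ ↥ErdosSpace) →
      Nonempty (↥(Endpoints Y) ≃ₜ ↥ErdosSpace) →
      Nonempty (↥X ≃ₜ ↥Y)) := by
  refine ⟨fun X hX => ⟨hX.dense_iff.trans hX.connected_iff, hX.dense_iff.trans hX.erdos_iff⟩,
    fun X Y hX hY h1 h2 => ?_⟩
  have := hX.compactSpace_fanBase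
  have := hX.totallyDisconnectedSpace_fanBase
  have := hX.nonempty_fanBase
  have := hY.compactSpace_fanBase
  have := hY.totallyDisconnectedSpace_fanBase
  have := hY.nonempty_fanBase
  obtain ⟨h, α, hα, hpos, he⟩ := exists_homeo_of_isLelek (hX.erdos_iff.2 h1) (hY.erdos_iff.2 h2)
  exact hX.nonempty_homeo hY h hα hpos he

end SmoothFanPaper
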